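/- arXiv:2304.05730 — 2 statements merged into one kernel-verified Lean document; each statement's English description precedes it below -/
import Mathlib

section
/- (A priori estimate for the two-dimensional ansatz.) Let d = 2, i ∈ {2,3}, and i ≤ m ≤ n. Let g = (g_j)_{j=i}^m with g_j ∈ ΓL²_j symmetric and Σ_{j=i}^m ‖(−L₀)^{−1/2} g_j‖² < ∞, and define ũ = (ũ_j)_{j=i}^n recursively by ũ_{i−1} := 0 and, for i ≤ j ≤ n, ũ_j := S^ε A⁺_ε ũ_{j−1} + S^ε g_j (with g_j := 0 for j > m). Then there exist a constant C > 0 independent of n and ε, and ε₂(n) > 0, such that for every ε < ε₂(n): Σ_{j=i}^n ‖(−L₀)^{1/2} ũ_j‖² ≤ C Σ_{j=i}^m ‖(−L₀)^{−1/2} g_j‖². -/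
open scoped BigOperators
open scoped Classical

noncomputable section

namespace SBE

/-- Lattice points of `ℤ^d`. -/
abbrev ZLat (d : ℕ) := Fin d → ℤ

/-- Kernels of the `n`-th chaos: functions on `n`-tuples of lattice points. -/
abbrev Chaos (d n : ℕ) := (Fin n → ZLat d) → ℂ

/-- Squared Euclidean norm of a lattice point. -/
def nsq {d : ℕ} (k : ZLat d) : ℝ := ∑ i, ((k i : ℝ))^2

/-- Euclidean norm of a lattice point. -/
def eN {d : ℕ} (k : ZLat d) : ℝ := Real.sqrt (nsq k)

/-- Supremum norm of a lattice point. -/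
def sN {d : ℕ} (k : ZLat d) : ℝ := ((Finset.univ.sup fun i => (k i).natAbs : ℕ) : ℝ)

/-- The norm used in the Fourier cutoff: Euclidean if `d = 2`, supremum otherwise. -/
def cutNorm (d : ℕ) (k : ZLat d) : ℝ := if d = 2 then eN k else sN k

/-- `w · k`. -/
def dotw {d : ℕ} (w : Fin d → ℝ) (k : ZLat d) : ℝ := ∑ i, w i * (k i : ℝ)

/-- `|k_{1:n}|² = Σ_i |k_i|²`. -/
def wSq {d n : ℕ} (k : Fin n → ZLat d) : ℝ := ∑ a, nsq (k a)

/-- The coupling constant `λ_ε`. -/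
def lam (d : ℕ) (ε : ℝ) : ℝ :=
  if d = 2 then (Real.sqrt (Real.log (1 / ε^2)))⁻¹ else ε ^ ((d:ℝ)/2 - 1)

/-- The Fourier cutoff indicator `J^ε_{ℓ,m}`. -/
def Jind (d : ℕ) (ε : ℝ) (l m : ZLat d) : ℝ :=
  if 0 < ε * cutNorm d l ∧ ε * cutNorm d l ≤ 1 ∧
     0 < ε * cutNorm d m ∧ ε * cutNorm d m ≤ 1 ∧
     0 < ε * cutNorm d (l + m) ∧ ε * cutNorm d (l + m) ≤ 1 then 1 else 0

/-- Symmetry of a kernel under permutation of its arguments. -/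
def Symm {d n : ℕ} (f : Chaos d n) : Prop :=
  ∀ (σ : Equiv.Perm (Fin n)) (k : Fin n → ZLat d), f (k ∘ σ) = f k

/-- A kernel vanishes whenever one of its arguments is the zero frequency
(i.e. it is really a function on `(ℤ^d_0)^n`). -/
def SuppOk {d n : ℕ} (f : Chaos d n) : Prop :=
  ∀ k : Fin n → ZLat d, (∃ a, k a = 0) → f k = 0

/-- Summand of `‖(-L₀)^s f‖²`. -/
def sobTerm {d n : ℕ} (s : ℝ) (f : Chaos d n) (k : Fin n → ZLat d) : ℝ :=
  (wSq k / 2) ^ (2*s) * ‖f k‖^2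

/-- `‖(-L₀)^s f‖² = n! Σ_k (|k_{1:n}|²/2)^{2s} |f(k)|²`. -/
def sobSq {d n : ℕ} (s : ℝ) (f : Chaos d n) : ℝ := (n.factorial : ℝ) * ∑' k, sobTerm s f k

/-- Remove the entries `i < j` from an `(n+2)`-tuple (order preservingly). -/
def remove2 {X : Type*} {n : ℕ} (k : Fin (n+2) → X) (i j : Fin (n+2)) (h : i < j) :
    Fin n → X :=
  fun a => k (j.succAbove ((Fin.castLT i
    (Nat.lt_of_lt_of_le (Fin.lt_def.mp h) (Nat.lt_succ_iff.mp j.isLt))).succAbove a))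

/-- The operator `A⁺_ε : ΓL²_{n+1} → ΓL²_{n+2}`. -/
def Aplus (d : ℕ) (w : Fin d → ℝ) (ε : ℝ) {n : ℕ} (f : Chaos d (n+1)) : Chaos d (n+2) :=
  fun k => -(2 * Complex.I / (((2*Real.pi) ^ ((d:ℝ)/2) : ℝ) : ℂ)) *
      ((lam d ε / ((n:ℝ)+2) : ℝ) : ℂ) *
    ∑ i : Fin (n+2), ∑ j : Fin (n+2),
      if h : i < j then
        ((dotw w (k i + k j) : ℝ) : ℂ) * ((Jind d ε (k i) (k j) : ℝ) : ℂ) *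
          f (Fin.cons (k i + k j) (remove2 k i j h))
      else 0

/-- The operator `A⁻_ε : ΓL²_{n+2} → ΓL²_{n+1}`. -/
def Aminus (d : ℕ) (w : Fin d → ℝ) (ε : ℝ) {n : ℕ} (f : Chaos d (n+2)) : Chaos d (n+1) :=
  fun k => (2 * Complex.I / (((2*Real.pi) ^ ((d:ℝ)/2) : ℝ) : ℂ)) *
      ((((n:ℝ)+2) * lam d ε : ℝ) : ℂ) *
    ∑ j : Fin (n+1), ((dotw w (k j) : ℝ) : ℂ) *
      ∑' l : ZLat d, ((Jind d ε l (k j - l) : ℝ) : ℂ) *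
        f (Fin.cons l (Fin.cons (k j - l) (fun a => k (j.succAbove a))))

/-- `L^ε(x) = λ_ε² log(1 + 1/(ε²x))`. -/
def Leps (ε x : ℝ) : ℝ := (lam 2 ε)^2 * Real.log (1 + 1/(ε^2 * x))

/-- `G(x) = c⁻¹ [(3cx/(2π) + 1)^{2/3} − 1]` (with `c = |w|²`). -/
def Gfun (c x : ℝ) : ℝ := c⁻¹ * ((3*c*x/(2*Real.pi) + 1) ^ ((2:ℝ)/3) - 1)

/-- `|w|²`. -/
def wnSq {d : ℕ} (w : Fin d → ℝ) : ℝ := ∑ i, (w i)^2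

/-- `(w·k)²_{1:n} = Σ_i (w·k_i)²`. -/
def wdotSq {d n : ℕ} (w : Fin d → ℝ) (k : Fin n → ZLat d) : ℝ := ∑ a, (dotw w (k a))^2

/-- Fourier multiplier of `S^ε = (−L₀ − L₀^w G^ε)⁻¹`. -/
def sigma' {n : ℕ} (w : Fin 2 → ℝ) (ε : ℝ) (k : Fin n → ZLat 2) : ℝ :=
  2 / (wSq k + wdotSq w k * Gfun (wnSq w) (Leps ε (wSq k / 2)))

/-- The operator `S^ε` acting diagonally on a kernel. -/
def SepsA (w : Fin 2 → ℝ) (ε : ℝ) {n : ℕ} (g : Chaos 2 n) : Chaos 2 n :=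
  fun k => ((sigma' w ε k : ℝ) : ℂ) * g k

lemma disc_vol (r : ℝ) :
    MeasureTheory.volume {y : Fin 2 → ℝ | y 0 ^ 2 + y 1 ^ 2 < r ^ 2} ≤
      ENNReal.ofReal (Real.pi * r ^ 2) := by
  have h := (EuclideanSpace.volume_preserving_symm_measurableEquiv_toLp (Fin 2)).symm
  have hm : MeasurableSet {y : Fin 2 → ℝ | y 0 ^ 2 + y 1 ^ 2 < r ^ 2} := by
    apply measurableSet_lt <;> fun_prop
  rw [← (EuclideanSpace.volume_preserving_symm_measurableEquiv_toLp (Fin 2)).measure_preimage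
    hm.nullMeasurableSet]
  have hsub : (⇑(MeasurableEquiv.toLp 2 (Fin 2 → ℝ)).symm ⁻¹' {y | y 0 ^ 2 + y 1 ^ 2 < r ^ 2}) ⊆
      Metric.ball (0 : EuclideanSpace ℝ (Fin 2)) |r| := by
    intro y hy
    simp only [Set.mem_preimage, Set.mem_ofPred_eq] at hy
    rw [mem_ball_zero_iff, EuclideanSpace.norm_eq, Fin.sum_univ_two, Real.sqrt_lt' (by
      rw [abs_pos]; rintro rfl; 
      have : 0 ≤ (y 0)^2 + (y 1)^2 := by positivity
      simp at hy
      linarith [hy])]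
    simpa using hy
  refine (MeasureTheory.measure_mono hsub).trans ?_
  rw [EuclideanSpace.volume_ball_fin_two]
  rw [← ENNReal.ofReal_pow (abs_nonneg r), sq_abs, mul_comm]
  rw [ENNReal.ofReal_mul Real.pi_pos.le]

/-- real quadratic form `|y|^2 + γ (w·y)^2` -/
def Qf (w : Fin 2 → ℝ) (γ : ℝ) (y : Fin 2 → ℝ) : ℝ :=
  y 0 ^ 2 + y 1 ^ 2 + γ * (w 0 * y 0 + w 1 * y 1) ^ 2

lemma ellipse_vol (w : Fin 2 → ℝ) (γ r : ℝ) (hγ : 0 ≤ γ) (hw : 0 < w 0 ^ 2 + w 1 ^ 2) :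
    MeasureTheory.volume {y : Fin 2 → ℝ | Qf w γ y < r ^ 2} ≤
      ENNReal.ofReal (Real.pi * r ^ 2 / Real.sqrt (1 + (w 0 ^ 2 + w 1 ^ 2) * γ)) := by
  set c := w 0 ^ 2 + w 1 ^ 2 with hc
  set D := Real.sqrt (1 + c * γ) with hD
  have hD0 : 0 < D := Real.sqrt_pos.mpr (by positivity)
  have hD2 : D ^ 2 = 1 + c * γ := Real.sq_sqrt (by positivity)
  set C := Real.sqrt c with hC
  have hC0 : 0 < C := Real.sqrt_pos.mpr hw
  have hC2 : C ^ 2 = c := Real.sq_sqrt hw.le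
  let A : Matrix (Fin 2) (Fin 2) ℝ := !![D * w 0 / C, D * w 1 / C; -w 1 / C, w 0 / C]
  have hdet : A.det = D := by
    rw [Matrix.det_fin_two]
    simp only [A, Matrix.of_apply, Matrix.cons_val', Matrix.cons_val_zero, Matrix.cons_val_one,
      Matrix.cons_val_fin_one]
    field_simp
    rw [hC2, hc]; ring
  have hdet' : LinearMap.det (Matrix.toLin' A) = D := by rw [LinearMap.det_toLin', hdet]
  have hset : {y : Fin 2 → ℝ | Qf w γ y < r ^ 2} =
      (Matrix.toLin' A) ⁻¹' {y : Fin 2 → ℝ | y 0 ^ 2 + y 1 ^ 2 < r ^ 2} := by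
    ext y
    simp only [Set.mem_ofPred_eq, Set.mem_preimage]
    have : (Matrix.toLin' A y) 0 ^ 2 + (Matrix.toLin' A y) 1 ^ 2 = Qf w γ y := by
      simp only [Matrix.toLin'_apply, Matrix.mulVec, dotProduct, Fin.sum_univ_two, A,
        Matrix.of_apply, Matrix.cons_val', Matrix.cons_val_zero, Matrix.cons_val_one,
        Matrix.cons_val_fin_one, Qf]
      field_simp
      rw [hD2, hC2, hc]; ring
    rw [this]
  rw [hset, MeasureTheory.Measure.addHaar_preimage_linearMap _ (by rw [hdet']; exact hD0.ne'),
    hdet', abs_of_pos (inv_pos.mpr hD0)]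
  calc _ ≤ ENNReal.ofReal D⁻¹ * ENNReal.ofReal (Real.pi * r ^ 2) := by
        gcongr; exact disc_vol r
    _ = _ := by
        rw [← ENNReal.ofReal_mul (by positivity)]
        congr 1; field_simp

lemma Qf_add_le (w : Fin 2 → ℝ) (γ : ℝ) (hγ : 0 ≤ γ) (x y : Fin 2 → ℝ) (a b : ℝ)
    (ha : 0 ≤ a) (hb : 0 ≤ b) (hx : Qf w γ x ≤ a ^ 2) (hy : Qf w γ y ≤ b ^ 2) :
    Qf w γ (x + y) ≤ (a + b) ^ 2 := by
  have key : x 0 * y 0 + x 1 * y 1 + γ * ((w 0 * x 0 + w 1 * x 1) * (w 0 * y 0 + w 1 * y 1))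
      ≤ a * b := by
    set g := Real.sqrt γ
    have hg : g ^ 2 = γ := Real.sq_sqrt hγ
    apply abs_le_of_sq_le_sq' _ (by positivity) |>.2
    simp only [Qf] at hx hy
    rw [← hg] at hx hy ⊢
    set u := w 0 * x 0 + w 1 * x 1
    set v := w 0 * y 0 + w 1 * y 1
    calc _ ≤ (x 0 ^ 2 + x 1 ^ 2 + g ^ 2 * u ^ 2) * (y 0 ^ 2 + y 1 ^ 2 + g ^ 2 * v ^ 2) := by
          nlinarith [sq_nonneg (x 0 * y 1 - x 1 * y 0), sq_nonneg (x 0 * (g * v) - g * u * y 0),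
            sq_nonneg (x 1 * (g * v) - g * u * y 1)]
      _ ≤ a ^ 2 * b ^ 2 := by gcongr
      _ = _ := by ring
  have : Qf w γ (x + y) = Qf w γ x + Qf w γ y + 2 * (x 0 * y 0 + x 1 * y 1 +
      γ * ((w 0 * x 0 + w 1 * x 1) * (w 0 * y 0 + w 1 * y 1))) := by
    simp only [Qf, Pi.add_apply]; ring
  rw [this]; nlinarith

/-- counting lattice points in an ellipse -/
lemma count_le (w : Fin 2 → ℝ) (hw : 0 < w 0 ^ 2 + w 1 ^ 2) (γ γm t κ : ℝ) (hγ : 0 ≤ γ)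
    (hγm : γ ≤ γm) (ht : 0 ≤ t) (hκ : 0 ≤ κ) (hκ2 : 2 * (1 + (w 0 ^ 2 + w 1 ^ 2) * γm) ≤ κ ^ 2)
    (s : Fin 2 → ℝ) (S : Finset (ZLat 2))
    (hS : ∀ l ∈ S, Qf w γ (fun a => (l a : ℝ) - s a) ≤ t) :
    (S.card : ℝ) ≤ Real.pi / Real.sqrt (1 + (w 0 ^ 2 + w 1 ^ 2) * γ) * (Real.sqrt t + κ) ^ 2 := by
  let cell : ZLat 2 → Set (Fin 2 → ℝ) := fun l =>
    Set.univ.pi fun a => Set.Ico ((l a : ℝ) - s a) ((l a : ℝ) - s a + 1)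
  have hvol : ∀ l, MeasureTheory.volume (cell l) = 1 := by
    intro l
    simp [cell, Real.volume_pi_Ico]
  have hmeas : ∀ l, MeasurableSet (cell l) := fun l =>
    MeasurableSet.univ_pi fun a => measurableSet_Ico
  have hdisj : (S : Set (ZLat 2)).PairwiseDisjoint cell := by
    intro l _ l' _ hne
    rw [Function.onFun, Set.disjoint_left]
    intro y hy hy'
    apply hne
    ext a
    have h1 := hy a (Set.mem_univ _)
    have h2 := hy' a (Set.mem_univ _)
    simp only [Set.mem_Ico] at h1 h2
    have h3 : (l a : ℝ) < l' a + 1 := by linarith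
    have h4 : (l' a : ℝ) < l a + 1 := by linarith
    have h3' : l a < l' a + 1 := by exact_mod_cast h3
    have h4' : l' a < l a + 1 := by exact_mod_cast h4
    omega
  have hsub : (⋃ l ∈ S, cell l) ⊆ {y : Fin 2 → ℝ | Qf w γ y < (Real.sqrt t + κ) ^ 2} := by
    intro y hy
    simp only [Set.mem_iUnion] at hy
    obtain ⟨l, hl, hy⟩ := hy
    have h0 := hy 0 (Set.mem_univ _)
    have h1 := hy 1 (Set.mem_univ _)
    simp only [Set.mem_Ico] at h0 h1
    set z : Fin 2 → ℝ := fun a => y a - ((l a : ℝ) - s a) with hz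
    have hyz : y = (fun a => (l a : ℝ) - s a) + z := by ext a; simp [hz]
    have z0 : 0 ≤ z 0 ∧ z 0 < 1 := ⟨by simp [hz]; linarith, by simp [hz]; linarith⟩
    have z1 : 0 ≤ z 1 ∧ z 1 < 1 := ⟨by simp [hz]; linarith, by simp [hz]; linarith⟩
    have hzlt : Qf w γ z < κ ^ 2 := by
      have e : z 0 ^ 2 + z 1 ^ 2 < 2 := by nlinarith
      have e2 : Qf w γ z ≤ (z 0 ^ 2 + z 1 ^ 2) * (1 + (w 0 ^ 2 + w 1 ^ 2) * γ) := by
        simp only [Qf]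
        nlinarith [mul_nonneg hγ (sq_nonneg (w 0 * z 1 - w 1 * z 0))]
      have e3 : (1 + (w 0 ^ 2 + w 1 ^ 2) * γ) ≤ (1 + (w 0 ^ 2 + w 1 ^ 2) * γm) := by gcongr
      have e4 : 0 < (1 + (w 0 ^ 2 + w 1 ^ 2) * γ) := by positivity
      nlinarith
    have hz0 : 0 ≤ Qf w γ z := by simp only [Qf]; positivity
    have hlt : Real.sqrt (Qf w γ z) < κ := by
      rw [Real.sqrt_lt' ]
      · exact hzlt
      · by_contra h
        have : κ = 0 := le_antisymm (not_lt.mp h) hκ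
        rw [this] at hzlt; simp at hzlt; linarith
    have := Qf_add_le w γ hγ _ z _ _ (Real.sqrt_nonneg t) (Real.sqrt_nonneg (Qf w γ z))
      (by rw [Real.sq_sqrt ht]; exact hS l hl) (by rw [Real.sq_sqrt hz0])
    rw [← hyz] at this
    refine lt_of_le_of_lt this ?_
    have := Real.sqrt_nonneg t
    have := Real.sqrt_nonneg (Qf w γ z)
    gcongr
  have h1 : MeasureTheory.volume (⋃ l ∈ S, cell l) = S.card := by
    rw [MeasureTheory.measure_biUnion_finset hdisj (fun l _ => hmeas l)]
    simp [hvol]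
  have h2 := (MeasureTheory.measure_mono hsub).trans (ellipse_vol w γ _ hγ hw)
  rw [h1] at h2
  have h3 : (S.card : ℝ) ≤ Real.pi * (Real.sqrt t + κ) ^ 2 / Real.sqrt (1 + (w 0 ^ 2 + w 1 ^ 2) * γ) := by
    have := ENNReal.toReal_mono ENNReal.ofReal_ne_top h2
    rwa [ENNReal.toReal_ofReal (by positivity), ENNReal.toReal_natCast] at this
  rw [div_mul_eq_mul_div]; exact h3

lemma nsq_two (k : ZLat 2) : nsq k = (k 0 : ℝ) ^ 2 + (k 1 : ℝ) ^ 2 := by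
  simp [nsq, Fin.sum_univ_two]

lemma nsq_nonneg {d : ℕ} (k : ZLat d) : 0 ≤ nsq k := by
  unfold nsq; positivity

lemma eN_sq {d : ℕ} (k : ZLat d) : eN k ^ 2 = nsq k := Real.sq_sqrt (nsq_nonneg k)

lemma eN_nonneg {d : ℕ} (k : ZLat d) : 0 ≤ eN k := Real.sqrt_nonneg _

lemma nsq_zero_iff {d : ℕ} (k : ZLat d) : nsq k = 0 ↔ k = 0 := by
  unfold nsq
  rw [Finset.sum_eq_zero_iff_of_nonneg (fun _ _ => sq_nonneg _)]
  constructor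
  · intro h; ext a; simpa using h a (Finset.mem_univ a)
  · rintro rfl; simp

lemma one_le_nsq {d : ℕ} (k : ZLat d) (h : k ≠ 0) : 1 ≤ nsq k := by
  have h1 : nsq k = ((∑ i, (k i) ^ 2 : ℤ) : ℝ) := by simp [nsq]
  have h2 : nsq k ≠ 0 := fun e => h ((nsq_zero_iff k).1 e)
  have h3 := nsq_nonneg k
  rw [h1] at *
  have : (∑ i, (k i) ^ 2 : ℤ) ≠ 0 := by exact_mod_cast h2
  have : (0:ℤ) ≤ (∑ i, (k i) ^ 2 : ℤ) := by exact_mod_cast h3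
  have : (1:ℤ) ≤ (∑ i, (k i) ^ 2 : ℤ) := by omega
  exact_mod_cast this

lemma tele (b : ℝ) (hb : 1 ≤ b) (M : ℕ) :
    ∑ n ∈ Finset.range M, b / (((n : ℝ) + 1) ^ 2 + b ^ 2) ≤ 2 := by
  have : ∑ n ∈ Finset.range M, b / (((n : ℝ) + 1) ^ 2 + b ^ 2) ≤ 2 * b * (1 / b - 1 / (M + b)) := by
    induction M with
    | zero => simp
    | succ M ih =>
      rw [Finset.sum_range_succ]
      have e : b / (((M : ℝ) + 1) ^ 2 + b ^ 2) ≤ 2 * b * (1 / (M + b) - 1 / (M + 1 + b)) := by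
        have hM : (0:ℝ) ≤ M := Nat.cast_nonneg M
        rw [div_sub_div _ _ (by positivity) (by positivity), mul_div_assoc', 
          div_le_div_iff₀ (by positivity) (by positivity)]
        nlinarith [mul_nonneg (by linarith : 0 ≤ b) (sq_nonneg ((M:ℝ) + 1 - b)),
          mul_nonneg (by linarith : 0 ≤ b) hM]
      push_cast
      linarith
  refine this.trans ?_
  have h1 : 0 ≤ 1 / ((M:ℝ) + b) := by positivity
  have h2 : 2 * b * (1 / b) = 2 := by field_simp
  nlinarith

lemma box_sum (b : ℝ) (hb : 1 ≤ b) (S : Finset (ZLat 2)) (hS : ∀ l ∈ S, l ≠ 0) :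
    ∑ l ∈ S, b / (eN l * (nsq l + b ^ 2)) ≤ 16 := by
  let μ : ZLat 2 → ℕ := fun l => max (l 0).natAbs (l 1).natAbs
  let M := S.sup μ
  have hpos : ∀ l ∈ S, 1 ≤ μ l := by
    intro l hl
    by_contra h
    apply hS l hl
    have h' : (l 0).natAbs = 0 ∧ (l 1).natAbs = 0 := by
      simp only [μ] at h; omega
    ext a; fin_cases a
    · simpa using h'.1
    · simpa using h'.2
  have hmaps : ∀ l ∈ S, μ l - 1 ∈ Finset.range M := by
    intro l hl
    have := hpos l hl
    have h2 : μ l ≤ M := Finset.le_sup hl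
    rw [Finset.mem_range]; omega
  rw [← Finset.sum_fiberwise_of_maps_to hmaps]
  have hμ : ∀ l : ZLat 2, (μ l : ℝ) ^ 2 ≤ nsq l := by
    intro l
    rw [nsq_two]
    simp only [μ]
    rcases le_total (l 0).natAbs (l 1).natAbs with h | h
    · rw [max_eq_right h, Nat.cast_natAbs, Int.cast_abs, sq_abs]; nlinarith [sq_nonneg (l 0 : ℝ)]
    · rw [max_eq_left h, Nat.cast_natAbs, Int.cast_abs, sq_abs]; nlinarith [sq_nonneg (l 1 : ℝ)]
  calc _ ≤ ∑ n ∈ Finset.range M, 8 * (b / (((n : ℝ) + 1) ^ 2 + b ^ 2)) := by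
        apply Finset.sum_le_sum
        intro n _
        have hc : ((S.filter fun l => μ l - 1 = n).card : ℝ) ≤ 8 * ((n : ℝ) + 1) := by
          have : (S.filter fun l => μ l - 1 = n).card ≤ (Finset.box (n + 1) : Finset (ℤ × ℤ)).card := by
            apply Finset.card_le_card_of_injOn (fun l => (l 0, l 1))
            · intro l hl
              simp only [Finset.coe_filter, Set.mem_ofPred_eq] at hl
              have := hpos l hl.1
              simp only [Finset.mem_coe, Int.mem_box]
              have h3 : μ l = n + 1 := by omega
              exact h3
            · intro l _ l' _ h
              simp only [Prod.mk.injEq] at h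
              ext a; fin_cases a
              · exact h.1
              · exact h.2
          rw [Int.card_box (by omega)] at this
          exact_mod_cast this
        have hb' : ∀ l ∈ S.filter (fun l => μ l - 1 = n), b / (eN l * (nsq l + b ^ 2)) ≤
            b / (((n : ℝ) + 1) * (((n:ℝ) + 1) ^ 2 + b ^ 2)) := by
          intro l hl
          rw [Finset.mem_filter] at hl
          have := hpos l hl.1
          have h3 : μ l = n + 1 := by omega
          have h4 := hμ l
          rw [h3] at h4
          push_cast at h4
          have h5 : (n : ℝ) + 1 ≤ eN l := Real.le_sqrt_of_sq_le h4
          have h6 := eN_nonneg l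
          gcongr
        calc _ ≤ ∑ l ∈ S.filter (fun l => μ l - 1 = n), 
              b / (((n : ℝ) + 1) * (((n:ℝ) + 1) ^ 2 + b ^ 2)) := Finset.sum_le_sum hb'
          _ = ((S.filter fun l => μ l - 1 = n).card : ℝ) * 
              (b / (((n : ℝ) + 1) * (((n:ℝ) + 1) ^ 2 + b ^ 2))) := by
              rw [Finset.sum_const, nsmul_eq_mul]
          _ ≤ 8 * ((n : ℝ) + 1) * (b / (((n : ℝ) + 1) * (((n:ℝ) + 1) ^ 2 + b ^ 2))) := by
              gcongr
          _ = _ := by field_simp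
    _ = 8 * ∑ n ∈ Finset.range M, (b / (((n : ℝ) + 1) ^ 2 + b ^ 2)) := by rw [Finset.mul_sum]
    _ ≤ 16 := by linarith [tele b hb M]

/-! G and L -/

lemma Gfun_hasDeriv (c x : ℝ) (hc : 0 < c) (hx : 0 ≤ x) :
    HasDerivAt (Gfun c) (1 / Real.pi / Real.sqrt (1 + c * Gfun c x)) x := by
  have hpi := Real.pi_pos
  set A := 3 * c * x / (2 * Real.pi) + 1 with hA
  have hA0 : 0 < A := by positivity
  have h1 : HasDerivAt (fun x : ℝ => 3 * c * x / (2 * Real.pi) + 1) (3 * c / (2 * Real.pi)) x := by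
    have := (((hasDerivAt_id x).const_mul (3 * c)).div_const (2 * Real.pi)).add_const 1
    simpa using this
  have h2 := (h1.rpow_const (p := (2:ℝ)/3) (Or.inl hA0.ne')).sub_const 1 |>.const_mul c⁻¹
  have e : 1 + c * Gfun c x = A ^ ((2:ℝ)/3) := by
    simp only [Gfun]; rw [← hA]; field_simp; ring
  have e2 : Real.sqrt (A ^ ((2:ℝ)/3)) = A ^ ((1:ℝ)/3) := by
    rw [Real.sqrt_eq_rpow, ← Real.rpow_mul hA0.le]; norm_num
  rw [e, e2]
  refine HasDerivAt.congr_deriv (f := Gfun c) h2 ?_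
  rw [← hA, show (2:ℝ)/3 - 1 = -(1/3) by norm_num, Real.rpow_neg hA0.le]
  field_simp

lemma Gfun_nonneg (c x : ℝ) (hc : 0 ≤ c) (hx : 0 ≤ x) : 0 ≤ Gfun c x := by
  have hpi := Real.pi_pos
  unfold Gfun
  have : (1:ℝ) ≤ (3 * c * x / (2 * Real.pi) + 1) ^ ((2:ℝ)/3) := by
    apply Real.one_le_rpow _ (by norm_num)
    have : 0 ≤ 3 * c * x / (2 * Real.pi) := by positivity
    linarith
  have h2 : 0 ≤ c⁻¹ := by positivity
  nlinarith

lemma Gfun_mono (c x y : ℝ) (hc : 0 ≤ c) (hx : 0 ≤ x) (hxy : x ≤ y) : Gfun c x ≤ Gfun c y := by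
  have hpi := Real.pi_pos
  unfold Gfun
  gcongr

lemma Gfun_lip (c x y : ℝ) (hc : 0 < c) (hx : 0 ≤ x) (hxy : x ≤ y) :
    Gfun c y ≤ Gfun c x + (y - x) / Real.pi := by
  have hpi := Real.pi_pos
  have hd : ∀ z, 0 ≤ z → HasDerivAt (fun z => Gfun c z - z / Real.pi)
      (1 / Real.pi / Real.sqrt (1 + c * Gfun c z) - 1 / Real.pi) z := fun z hz =>
    (Gfun_hasDeriv c z hc hz).sub ((hasDerivAt_id z).div_const _)
  have : AntitoneOn (fun z => Gfun c z - z / Real.pi) (Set.Ici 0) := by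
    apply antitoneOn_of_deriv_nonpos (convex_Ici 0)
    · exact fun z hz => (hd z hz).continuousAt.continuousWithinAt
    · intro z hz
      rw [interior_Ici] at hz
      exact (hd z (le_of_lt hz)).differentiableAt.differentiableWithinAt
    · intro z hz
      rw [interior_Ici] at hz
      have hz' : 0 ≤ z := le_of_lt hz
      rw [(hd z hz').deriv]
      have : 1 ≤ Real.sqrt (1 + c * Gfun c z) := by
        rw [Real.one_le_sqrt]
        have := mul_nonneg hc.le (Gfun_nonneg c z hc.le hz')
        linarith
      have := div_le_self (by positivity : 0 ≤ 1 / Real.pi) this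
      linarith
  have h := this (Set.mem_Ici.2 hx) (Set.mem_Ici.2 (hx.trans hxy)) hxy
  simp only at h
  rw [sub_div]; linarith

lemma Leps_nonneg (ε x : ℝ) (hx : 0 ≤ x) : 0 ≤ Leps ε x := by
  unfold Leps
  apply mul_nonneg (sq_nonneg _)
  apply Real.log_nonneg
  have : 0 ≤ 1 / (ε ^ 2 * x) := by positivity
  linarith

lemma Leps_anti (ε x y : ℝ) (hε : 0 < ε) (hx : 0 < x) (hxy : x ≤ y) : Leps ε y ≤ Leps ε x := by
  unfold Leps
  have hy : 0 < y := hx.trans_le hxy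
  gcongr

lemma Leps_double (ε x y : ℝ) (hε : 0 < ε) (hx : 0 < x) (hxy : y ≤ 2 * x) (hy : 0 < y) :
    Leps ε x ≤ Leps ε y + (lam 2 ε) ^ 2 * Real.log 2 := by
  unfold Leps
  rw [← mul_add, ← Real.log_mul (by positivity) (by norm_num)]
  gcongr
  have : 1 / (ε ^ 2 * x) ≤ 1 / (ε ^ 2 * y) * 2 := by
    rw [div_mul_eq_mul_div, div_le_div_iff₀ (by positivity) (by positivity)]
    have := mul_le_mul_of_nonneg_left hxy (sq_nonneg ε)
    linarith
  linarith

lemma lam_sq (ε : ℝ) (hε : 0 < ε) (h1 : ε < 1) : (lam 2 ε) ^ 2 = (Real.log (1 / ε ^ 2))⁻¹ := by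
  have : 0 ≤ Real.log (1 / ε ^ 2) := by
    apply Real.log_nonneg
    rw [le_div_iff₀ (by positivity)]
    nlinarith
  simp only [lam, if_true]
  rw [inv_pow, Real.sq_sqrt this]

lemma Leps_le_three (ε x : ℝ) (hε : 0 < ε) (h1 : ε < 1 / 3) (hx : 1 / 4 ≤ x) : Leps ε x ≤ 3 := by
  unfold Leps
  rw [lam_sq ε hε (by linarith)]
  have h9 : 9 ≤ 1 / ε ^ 2 := by
    rw [le_div_iff₀ (by positivity)]; nlinarith
  have hpos : 0 < Real.log (1 / ε ^ 2) := Real.log_pos (by linarith)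
  rw [inv_mul_le_iff₀ hpos]
  have : Real.log (1 / ε ^ 2) * 3 = Real.log ((1 / ε ^ 2) ^ 3) := by
    rw [Real.log_pow]; push_cast; ring
  rw [this]
  gcongr
  have e : 1 / (ε ^ 2 * x) ≤ 4 * (1 / ε ^ 2) := by
    rw [mul_one_div, div_le_div_iff₀ (by positivity) (by positivity)]
    nlinarith [sq_nonneg ε]
  set z := 1 / ε ^ 2
  nlinarith [mul_nonneg (by linarith : 0 ≤ z) (by linarith : 0 ≤ z - 9)]

lemma Leps_hasDeriv (ε x : ℝ) (hε : 0 < ε) (hx : 0 < x) :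
    HasDerivAt (Leps ε) (-((lam 2 ε) ^ 2 / (x * (1 + ε ^ 2 * x)))) x := by
  have h1 : HasDerivAt (fun x : ℝ => 1 + 1 / (ε ^ 2 * x)) (-(ε ^ 2) / (ε ^ 2 * x) ^ 2) x := by
    have h := (((hasDerivAt_id x).const_mul (ε ^ 2)).inv (by simp; exact ⟨hε.ne', hx.ne'⟩)).const_add 1
    simpa [one_div] using h
  have h2 := (h1.log (by positivity)).const_mul ((lam 2 ε) ^ 2)
  refine HasDerivAt.congr_deriv (f := Leps ε) h2 ?_
  field_simp
  try ring

lemma layer {ι : Type*} (S : Finset ι) (H : ι → ℝ) (α T : ℝ) (hα : 0 < α) (hT : α ≤ T)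
    (h1 : ∀ l ∈ S, α ≤ H l) (h2 : ∀ l ∈ S, H l ≤ T) (F F' : ℝ → ℝ)
    (hF : ∀ t, α ≤ t → HasDerivAt F (F' t) t)
    (hc : ∀ t, α < t → ((S.filter fun l => H l < t).card : ℝ) / t ^ 2 ≤ F' t) :
    ∑ l ∈ S, 1 / H l ≤ S.card / T + (F T - F α) := by
  let φ : ι → ℝ → ℝ := fun l => (Set.Ioi (H l)).indicator (fun t => 1 / t ^ 2)
  have hcont : ∀ a b : ℝ, α ≤ a → ContinuousOn (fun t : ℝ => 1 / t ^ 2) (Set.Icc a b) := by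
    intro a b ha t ht
    have : 0 < t := hα.trans_le (ha.trans ht.1)
    exact (continuousAt_const.div (continuousAt_id.pow 2) (by simp; exact this.ne')).continuousWithinAt
  have hint : ∀ l, MeasureTheory.IntegrableOn (φ l) (Set.Icc α T) := by
    intro l
    exact ((hcont α T le_rfl).integrableOn_Icc).indicator measurableSet_Ioi
  have hval : ∀ l ∈ S, ∫ t in α..T, φ l t = 1 / H l - 1 / T := by
    intro l hl
    have a1 := h1 l hl
    have a2 := h2 l hl
    rw [intervalIntegral.integral_of_le hT]
    have : ∫ t in Set.Ioc α T, φ l t = ∫ t in Set.Ioc (H l) T, (1 / t ^ 2 : ℝ) := by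
      rw [MeasureTheory.setIntegral_indicator measurableSet_Ioi]
      congr 2
      ext t
      simp only [Set.mem_inter_iff, Set.mem_Ioc, Set.mem_Ioi]
      constructor
      · rintro ⟨⟨_, b⟩, c⟩; exact ⟨c, b⟩
      · rintro ⟨b, c⟩; exact ⟨⟨a1.trans_lt b, c⟩, b⟩
    rw [this, ← intervalIntegral.integral_of_le a2]
    have := intervalIntegral.integral_eq_sub_of_hasDerivAt (a := H l) (b := T)
      (f := fun t : ℝ => - t⁻¹) (f' := fun t => 1 / t ^ 2) (by
        intro t ht
        rw [Set.uIcc_of_le a2] at ht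
        have ht0 : 0 < t := hα.trans_le (a1.trans ht.1)
        have := (hasDerivAt_inv ht0.ne').neg
        exact HasDerivAt.congr_deriv (f := fun t : ℝ => - t⁻¹) this (by simp [one_div])) (by
        apply ContinuousOn.intervalIntegrable
        rw [Set.uIcc_of_le a2]
        exact hcont _ _ a1)
    rw [this]; simp only [one_div]; ring
  have hle := intervalIntegral.integral_le_sub_of_hasDeriv_right_of_le (a := α) (b := T) hT
    (g := F) (g' := F') (φ := fun t => ∑ l ∈ S, φ l t)
    (fun t ht => (hF t ht.1).continuousAt.continuousWithinAt)
    (fun t ht => (hF t ht.1.le).hasDerivWithinAt)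
    (MeasureTheory.integrable_finsetSum _ (fun l _ => hint l))
    (by
      intro t ht
      refine le_trans (le_of_eq ?_) (hc t ht.1)
      have : ∀ l ∈ S, φ l t = if H l < t then 1 / t ^ 2 else 0 := by
        intro l _
        simp only [φ, Set.indicator, Set.mem_Ioi]
      rw [Finset.sum_congr rfl this, ← Finset.sum_filter, Finset.sum_const, nsmul_eq_mul, mul_one_div])
  rw [intervalIntegral.integral_finsetSum, Finset.sum_congr rfl hval, Finset.sum_sub_distrib,
    Finset.sum_const, nsmul_eq_mul, mul_one_div] at hle
  · linarith
  · intro l _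
    rw [intervalIntegrable_iff_integrableOn_Icc_of_le hT]
    exact hint l

lemma F_deriv (c Λ κ ε t : ℝ) (hc : 0 < c) (hΛ : Λ = (lam 2 ε) ^ 2) (hΛ0 : 0 < Λ) (hε : 0 < ε)
    (ht : 0 < t) :
    HasDerivAt (fun t => -(Real.pi ^ 2 / Λ * Gfun c (Leps ε t)) +
      Real.pi * (Real.log (1 + ε ^ 2 * t) - 4 * κ * (Real.sqrt t)⁻¹ - κ ^ 2 * t⁻¹))
     (Real.pi / Real.sqrt (1 + c * Gfun c (Leps ε t)) / (t * (1 + ε ^ 2 * t)) +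
      Real.pi * (ε ^ 2 / (1 + ε ^ 2 * t) + 2 * κ * Real.sqrt t / t ^ 2 + κ ^ 2 / t ^ 2)) t := by
  have hpi := Real.pi_pos
  have hs : 0 < Real.sqrt t := Real.sqrt_pos.mpr ht
  have hG0 := Gfun_nonneg c _ hc.le (Leps_nonneg ε t ht.le)
  have hq : 0 < Real.sqrt (1 + c * Gfun c (Leps ε t)) := Real.sqrt_pos.mpr (by positivity)
  have h1 := ((Gfun_hasDeriv c _ hc (Leps_nonneg ε t ht.le)).comp t (Leps_hasDeriv ε t hε ht)).const_mul
    (Real.pi ^ 2 / Λ) |>.neg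
  have h2 : HasDerivAt (fun t => Real.log (1 + ε ^ 2 * t)) (ε ^ 2 / (1 + ε ^ 2 * t)) t := by
    have := (((hasDerivAt_id t).const_mul (ε ^ 2)).const_add 1).log (by simp; positivity)
    simpa using this
  have h3 := ((Real.hasDerivAt_sqrt ht.ne').inv hs.ne').const_mul (4 * κ)
  have h4 := (hasDerivAt_inv ht.ne').const_mul (κ ^ 2)
  have h5 := h1.add (((h2.sub h3).sub h4).const_mul Real.pi)
  refine HasDerivAt.congr_deriv (f := (fun t => -(Real.pi ^ 2 / Λ * Gfun c (Leps ε t)) +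
      Real.pi * (Real.log (1 + ε ^ 2 * t) - 4 * κ * (Real.sqrt t)⁻¹ - κ ^ 2 * t⁻¹))) h5 ?_
  rw [← hΛ]
  have e : Real.sqrt t ^ 2 = t := Real.sq_sqrt ht.le
  have e1 : Real.sqrt t / t ^ 2 = 1 / (t * Real.sqrt t) := by
    rw [div_eq_div_iff (by positivity) (by positivity)]; nlinarith
  rw [mul_div_assoc (2 * κ), e1, e]
  field_simp
  ring

set_option maxHeartbeats 2000000 in
lemma main_sum (w : Fin 2 → ℝ) (hw : 0 < w 0 ^ 2 + w 1 ^ 2) :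
    ∃ K : ℝ, 0 ≤ K ∧ ∀ ε : ℝ, 0 < ε → ε < 1 / 3 → ∀ (p : ZLat 2) (R : ℝ), p ≠ 0 → 0 ≤ R →
      ∀ S : Finset (ZLat 2), (∀ l ∈ S, nsq l ≤ 1 / ε ^ 2 ∧ nsq (p - l) ≤ 1 / ε ^ 2) →
      ∀ H : ZLat 2 → ℝ, (∀ l ∈ S, H l = (nsq l + nsq (p - l) + R) / 2 +
        (w 0 * ((l 0 : ℝ) - (p 0 : ℝ) / 2) + w 1 * ((l 1 : ℝ) - (p 1 : ℝ) / 2)) ^ 2 *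
          Gfun (w 0 ^ 2 + w 1 ^ 2) (Leps ε ((nsq l + nsq (p - l) + R) / 2))) →
      (lam 2 ε) ^ 2 / Real.pi ^ 2 * ∑ l ∈ S, 1 / H l ≤
        Gfun (w 0 ^ 2 + w 1 ^ 2) (Leps ε ((nsq p + R) / 2)) + K * (lam 2 ε) ^ 2 := by
  have hpi := Real.pi_pos
  set c := w 0 ^ 2 + w 1 ^ 2 with hc
  set γm := Gfun c 3 with hγm
  have hγm0 : 0 ≤ γm := Gfun_nonneg c 3 hw.le (by norm_num)
  set κ := Real.sqrt (2 * (1 + c * γm)) with hκ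
  have hκ0 : 0 ≤ κ := Real.sqrt_nonneg _
  have hκ2 : κ ^ 2 = 2 * (1 + c * γm) := Real.sq_sqrt (by positivity)
  have hlogpos : 0 ≤ Real.log (2 * (1 + c * γm)) := Real.log_nonneg (by nlinarith [mul_nonneg hw.le hγm0])
  refine ⟨(1 + 2 * κ) ^ 2 / Real.pi + (Real.log (2 * (1 + c * γm)) + 8 * κ + 4 * κ ^ 2) / Real.pi
    + Real.log 2 / Real.pi, by
      have := Real.log_nonneg (by norm_num : (1:ℝ) ≤ 2)
      positivity, ?_⟩
  intro ε hε hε3 p R hp hR S hS H hH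
  have hp1 := one_le_nsq p hp
  set Λ := (lam 2 ε) ^ 2 with hΛ
  have hΛ0 : 0 < Λ := by
    rw [hΛ, lam_sq ε hε (by linarith)]
    apply inv_pos.mpr (Real.log_pos _)
    rw [lt_div_iff₀ (by positivity)]; nlinarith
  set α := nsq p / 4 + R / 2 with hα
  have hα4 : 1 / 4 ≤ α := by rw [hα]; linarith
  set q : ZLat 2 → ℝ := fun l => ((l 0 : ℝ) - (p 0 : ℝ) / 2) ^ 2 + ((l 1 : ℝ) - (p 1 : ℝ) / 2) ^ 2 with hq
  have hx : ∀ l, (nsq l + nsq (p - l) + R) / 2 = q l + α := by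
    intro l
    simp only [nsq_two, hq, hα, Pi.sub_apply, Int.cast_sub]; ring
  have hq0 : ∀ l, 0 ≤ q l := by intro l; simp only [hq]; positivity
  have hqε : ∀ l ∈ S, q l ≤ 1 / ε ^ 2 := by
    intro l hl
    have := hS l hl
    have h1 := hx l
    have h2 : 0 ≤ nsq p := by linarith
    rw [hα] at h1
    linarith
  have hGb : ∀ x, 1 / 4 ≤ x → 0 ≤ Gfun c (Leps ε x) ∧ Gfun c (Leps ε x) ≤ γm := by
    intro x hx
    have := Leps_nonneg ε x (by linarith)
    exact ⟨Gfun_nonneg c _ hw.le this, Gfun_mono c _ _ hw.le this (Leps_le_three ε x hε hε3 hx)⟩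
  set v : ZLat 2 → ℝ := fun l => (w 0 * ((l 0 : ℝ) - (p 0 : ℝ) / 2) + w 1 * ((l 1 : ℝ) - (p 1 : ℝ) / 2)) ^ 2
    with hv
  have hv0 : ∀ l, 0 ≤ v l := by intro l; simp only [hv]; positivity
  have hvq : ∀ l, v l ≤ c * q l := by
    intro l
    simp only [hv, hq, hc]
    nlinarith [sq_nonneg (w 0 * ((l 1 : ℝ) - (p 1 : ℝ) / 2) - w 1 * ((l 0 : ℝ) - (p 0 : ℝ) / 2))]
  have hH' : ∀ l ∈ S, H l = q l + α + v l * Gfun c (Leps ε (q l + α)) := by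
    intro l hl; rw [hH l hl, hx l]
  set T := (1 + c * γm) * (1 / ε ^ 2 + α) with hT
  have hαT : α ≤ T := by
    rw [hT]
    have : 0 ≤ c * γm := by positivity
    have : 0 < 1 / ε ^ 2 := by positivity
    nlinarith
  have b1 : ∀ l ∈ S, α ≤ H l := by
    intro l hl
    rw [hH' l hl]
    have := mul_nonneg (hv0 l) (hGb (q l + α) (by linarith [hq0 l])).1
    linarith [hq0 l]
  have b2 : ∀ l ∈ S, H l ≤ T := by
    intro l hl
    rw [hH' l hl, hT]
    have h1 := hGb (q l + α) (by linarith [hq0 l])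
    have h2 := hqε l hl
    have h3 : v l * Gfun c (Leps ε (q l + α)) ≤ (c * q l) * γm :=
      mul_le_mul (hvq l) h1.2 h1.1 (by have := hq0 l; positivity)
    have h4 : 0 ≤ c * γm := by positivity
    nlinarith [mul_le_mul_of_nonneg_left h2 h4, mul_nonneg h4 (by linarith : 0 ≤ α)]
  have cnt : ∀ t, α < t → ∀ S' ⊆ S, (∀ l ∈ S', H l ≤ t) → (S'.card : ℝ) ≤
      Real.pi / Real.sqrt (1 + c * Gfun c (Leps ε t)) * (Real.sqrt t + κ) ^ 2 := by
    intro t ht S' hS' hle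
    have ht4 : 1 / 4 ≤ t := by linarith
    refine count_le w hw (Gfun c (Leps ε t)) γm t κ (hGb t ht4).1 (hGb t ht4).2 (by linarith) hκ0
      hκ2.ge (fun a => (p a : ℝ) / 2) S' ?_
    intro l hl
    have hl' := hS' hl
    have e := hle l hl
    rw [hH' l hl'] at e
    have hqq : 1 / 4 ≤ q l + α := by linarith [hq0 l]
    have e1 : q l + α ≤ t := by
      have := mul_nonneg (hv0 l) (hGb (q l + α) hqq).1
      linarith
    have e2 : Gfun c (Leps ε t) ≤ Gfun c (Leps ε (q l + α)) :=
      Gfun_mono c _ _ hw.le (Leps_nonneg ε t (by linarith)) (Leps_anti ε _ _ hε (by linarith) e1)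
    have e3 := mul_le_mul_of_nonneg_left e2 (hv0 l)
    have e4 : Qf w (Gfun c (Leps ε t)) (fun a => (l a : ℝ) - (p a : ℝ) / 2) =
      q l + v l * Gfun c (Leps ε t) := by
      simp only [Qf, hq, hv]; ring
    rw [e4]; linarith
  have s1 : ∀ t, 1 / 4 ≤ t → 1 ≤ Real.sqrt (1 + c * Gfun c (Leps ε t)) := by
    intro t ht
    rw [Real.one_le_sqrt]
    have := mul_nonneg hw.le (hGb t ht).1
    linarith
  have hlay := layer S H α T (by linarith) hαT b1 b2 _ _
    (fun t ht => F_deriv c Λ κ ε t hw hΛ hΛ0 hε (by linarith)) (by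
      intro t ht
      have ht4 : 1 / 4 ≤ t := by linarith
      have ht0 : 0 < t := by linarith
      have h1 := cnt t ht (S.filter fun l => H l < t) (Finset.filter_subset _ _)
        (fun l hl => ((Finset.mem_filter.1 hl).2).le)
      have hs := s1 t ht4
      set D := Real.sqrt (1 + c * Gfun c (Leps ε t))
      have hD0 : 0 < D := by linarith
      have hi : Real.pi / D ≤ Real.pi := div_le_self hpi.le hs
      set P := Real.pi / D
      have hP0 : 0 < P := by positivity
      have hst : Real.sqrt t ^ 2 = t := Real.sq_sqrt ht0.le
      have hst0 := Real.sqrt_nonneg t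
      calc _ ≤ P * (Real.sqrt t + κ) ^ 2 / t ^ 2 := by gcongr
        _ = P * (1 / t) + P * (2 * κ * Real.sqrt t / t ^ 2 + κ ^ 2 / t ^ 2) := by
            rw [add_sq, hst]; field_simp; ring
        _ = P / (t * (1 + ε ^ 2 * t)) + P * (ε ^ 2 / (1 + ε ^ 2 * t) + 2 * κ * Real.sqrt t / t ^ 2 + κ ^ 2 / t ^ 2) := by
            have : 1 / t = 1 / (t * (1 + ε ^ 2 * t)) + ε ^ 2 / (1 + ε ^ 2 * t) := by
              field_simp
            rw [this]; ring
        _ ≤ _ := by gcongr)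
  have hTpos : 1 / 4 ≤ T := hα4.trans hαT
  have hcard : (S.card : ℝ) / T ≤ Real.pi * (1 + 2 * κ) ^ 2 := by
    have hαT' : α < T := by
      rw [hT]
      have : 0 ≤ c * γm := by positivity
      have : 0 < 1 / ε ^ 2 := by positivity
      nlinarith
    have h1 := cnt T hαT' S (Finset.Subset.refl _) b2
    have hi : Real.pi / Real.sqrt (1 + c * Gfun c (Leps ε T)) ≤ Real.pi := div_le_self hpi.le (s1 T hTpos)
    have hsT : 1 / 2 ≤ Real.sqrt T := Real.le_sqrt_of_sq_le (by linarith)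
    rw [div_le_iff₀ (by linarith)]
    have e : Real.sqrt T ^ 2 = T := Real.sq_sqrt (by linarith)
    calc _ ≤ _ := h1
      _ ≤ Real.pi * (Real.sqrt T + κ) ^ 2 := by gcongr
      _ ≤ Real.pi * (Real.sqrt T + 2 * κ * Real.sqrt T) ^ 2 := by
          gcongr; nlinarith
      _ = Real.pi * (1 + 2 * κ) ^ 2 * Real.sqrt T ^ 2 := by ring
      _ = _ := by rw [e]
  have hG1 : Gfun c (Leps ε α) ≤ Gfun c (Leps ε ((nsq p + R) / 2)) + Λ * Real.log 2 / Real.pi := by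
    have hb : 0 < (nsq p + R) / 2 := by linarith
    have h1 := Leps_double ε α ((nsq p + R) / 2) hε (by linarith) (by rw [hα]; linarith) hb
    have h0 := Leps_nonneg ε _ hb.le
    have h2 := Real.log_nonneg (by norm_num : (1:ℝ) ≤ 2)
    have h3 := Gfun_lip c (Leps ε ((nsq p + R) / 2)) (Leps ε ((nsq p + R) / 2) + Λ * Real.log 2) hw h0
      (by have := mul_nonneg hΛ0.le h2; linarith)
    have h4 := Gfun_mono c _ _ hw.le (Leps_nonneg ε α (by linarith)) h1
    simp only [add_sub_cancel_left] at h3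
    exact h4.trans h3
  have hlog : Real.log (1 + ε ^ 2 * T) ≤ Real.log (2 * (1 + c * γm)) + Real.log (1 + ε ^ 2 * α) := by
    rw [← Real.log_mul (by positivity) (by positivity)]
    have : 0 ≤ T := by linarith
    gcongr
    rw [hT]
    have e : ε ^ 2 * ((1 + c * γm) * (1 / ε ^ 2 + α)) = (1 + c * γm) * (1 + ε ^ 2 * α) := by
      field_simp
    rw [e]
    have h1 : 1 ≤ 1 + c * γm := by have := mul_nonneg hw.le hγm0; linarith
    have h2 : 1 ≤ 1 + ε ^ 2 * α := by have : 0 ≤ ε ^ 2 * α := by positivity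
                                      linarith
    nlinarith
  have hsα : (Real.sqrt α)⁻¹ ≤ 2 := by
    have : 1 / 2 ≤ Real.sqrt α := Real.le_sqrt_of_sq_le (by linarith)
    rw [inv_le_comm₀ (by linarith) (by norm_num)]; linarith
  have hα' : α⁻¹ ≤ 4 := by
    rw [inv_le_comm₀ (by linarith) (by norm_num)]; linarith
  have hGT := (hGb T hTpos).1
  have hTi : 0 ≤ T⁻¹ := by positivity
  have hTs : 0 ≤ (Real.sqrt T)⁻¹ := by positivity
  have hbr : (Real.log (1 + ε ^ 2 * T) - 4 * κ * (Real.sqrt T)⁻¹ - κ ^ 2 * T⁻¹) -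
      (Real.log (1 + ε ^ 2 * α) - 4 * κ * (Real.sqrt α)⁻¹ - κ ^ 2 * α⁻¹) ≤
      Real.log (2 * (1 + c * γm)) + 8 * κ + 4 * κ ^ 2 := by
    nlinarith [mul_nonneg hκ0 hTs, mul_nonneg (sq_nonneg κ) hTi,
      mul_le_mul_of_nonneg_left hsα hκ0, mul_le_mul_of_nonneg_left hα' (sq_nonneg κ)]
  have hfin : ∑ l ∈ S, 1 / H l ≤ Real.pi * (1 + 2 * κ) ^ 2 +
      Real.pi ^ 2 / Λ * (Gfun c (Leps ε ((nsq p + R) / 2)) + Λ * Real.log 2 / Real.pi) +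
      Real.pi * (Real.log (2 * (1 + c * γm)) + 8 * κ + 4 * κ ^ 2) := by
    have h1 := mul_le_mul_of_nonneg_left hG1 (by positivity : 0 ≤ Real.pi ^ 2 / Λ)
    have h2 := mul_le_mul_of_nonneg_left hbr hpi.le
    have h3 : 0 ≤ Real.pi ^ 2 / Λ * Gfun c (Leps ε T) := by positivity
    linarith
  calc _ ≤ Λ / Real.pi ^ 2 * (Real.pi * (1 + 2 * κ) ^ 2 +
      Real.pi ^ 2 / Λ * (Gfun c (Leps ε ((nsq p + R) / 2)) + Λ * Real.log 2 / Real.pi) +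
      Real.pi * (Real.log (2 * (1 + c * γm)) + 8 * κ + 4 * κ ^ 2)) := by gcongr
    _ = _ := by field_simp; ring

def X2 {n : ℕ} (k : Fin (n+1) → ZLat 2) (l : ZLat 2) : ℝ :=
  nsq (k 0 - l) + nsq l + ∑ a : Fin n, nsq (k a.succ)

def Y2 {n : ℕ} (w : Fin 2 → ℝ) (k : Fin (n+1) → ZLat 2) (l : ZLat 2) : ℝ :=
  dotw w (k 0 - l) ^ 2 + dotw w l ^ 2 + ∑ a : Fin n, dotw w (k a.succ) ^ 2

def sig2 {n : ℕ} (w : Fin 2 → ℝ) (ε : ℝ) (k : Fin (n+1) → ZLat 2) (l : ZLat 2) : ℝ :=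
  2 / (X2 k l + Y2 w k l * Gfun (wnSq w) (Leps ε (X2 k l / 2)))

def V2 {n : ℕ} (k : Fin (n+1) → ZLat 2) (l : ZLat 2) : ℝ :=
  ∑ a : Fin n, eN (k a.succ) * (1 / eN (k 0 - l) + 1 / eN l)

def cutS (ε : ℝ) : Finset (ZLat 2) := Fintype.piFinset fun _ => Finset.Icc (-⌈1/ε⌉) ⌈1/ε⌉

lemma Jind_cases (ε : ℝ) (l m : ZLat 2) : Jind 2 ε l m = 0 ∨ Jind 2 ε l m = 1 := by
  unfold Jind; split_ifs <;> simp

lemma Jind_nonneg (ε : ℝ) (l m : ZLat 2) : 0 ≤ Jind 2 ε l m := by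
  rcases Jind_cases ε l m with h | h <;> rw [h]; norm_num

lemma Jind_sq (ε : ℝ) (l m : ZLat 2) : Jind 2 ε l m ^ 2 = Jind 2 ε l m := by
  rcases Jind_cases ε l m with h | h <;> rw [h] <;> norm_num

lemma eN_zero : eN (0 : ZLat 2) = 0 := by simp [eN, nsq]

lemma one_le_eN (k : ZLat 2) (h : k ≠ 0) : 1 ≤ eN k := by
  unfold eN; rw [Real.one_le_sqrt]; exact one_le_nsq k h

lemma Jind_ne (ε : ℝ) (hε : 0 < ε) (l m : ZLat 2) (h : Jind 2 ε l m ≠ 0) :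
    l ≠ 0 ∧ m ≠ 0 ∧ l + m ≠ 0 ∧ nsq l ≤ 1 / ε ^ 2 ∧ nsq m ≤ 1 / ε ^ 2 := by
  unfold Jind at h
  simp only [cutNorm, if_true] at h
  split_ifs at h with h'
  · obtain ⟨h1, h2, h3, h4, h5, h6⟩ := h'
    have nz : ∀ k : ZLat 2, 0 < ε * eN k → k ≠ 0 := by
      rintro k hk rfl
      rw [eN_zero] at hk; simp at hk
    have bd : ∀ k : ZLat 2, ε * eN k ≤ 1 → nsq k ≤ 1 / ε ^ 2 := by
      intro k hk
      rw [le_div_iff₀ (by positivity), ← eN_sq]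
      have := eN_nonneg k
      have h0 : 0 ≤ ε * eN k := by positivity
      nlinarith
    exact ⟨nz _ h1, nz _ h3, nz _ h5, bd _ h2, bd _ h4⟩
  · simp at h

lemma mem_cutS (ε : ℝ) (hε : 0 < ε) (l : ZLat 2) (h : nsq l ≤ 1 / ε ^ 2) : l ∈ cutS ε := by
  unfold cutS
  rw [Fintype.mem_piFinset]
  intro a
  have h1 : (l a : ℝ) ^ 2 ≤ (1 / ε) ^ 2 := by
    rw [one_div_pow]
    refine le_trans ?_ h
    unfold nsq
    exact Finset.single_le_sum (f := fun i => (l i : ℝ) ^ 2) (fun _ _ => sq_nonneg _) (Finset.mem_univ a)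
  have h2 := abs_le_of_sq_le_sq' h1 (by positivity)
  have h3 := Int.le_ceil (1 / ε)
  rw [Finset.mem_Icc]
  constructor
  · have : ((-⌈1/ε⌉ : ℤ) : ℝ) ≤ l a := by push_cast; linarith
    exact_mod_cast this
  · have : (l a : ℝ) ≤ (⌈1/ε⌉ : ℤ) := by linarith
    exact_mod_cast this

lemma wnSq_two (w : Fin 2 → ℝ) : wnSq w = w 0 ^ 2 + w 1 ^ 2 := by simp [wnSq, Fin.sum_univ_two]

lemma wnSq_pos (w : Fin 2 → ℝ) (hw : w ≠ 0) : 0 < wnSq w := by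
  rw [wnSq_two]
  by_contra h
  apply hw
  have h0 : w 0 ^ 2 = 0 := by nlinarith [sq_nonneg (w 0), sq_nonneg (w 1)]
  have h1 : w 1 ^ 2 = 0 := by nlinarith [sq_nonneg (w 0), sq_nonneg (w 1)]
  ext a; fin_cases a
  · simpa using h0
  · simpa using h1

lemma X2_nonneg {n : ℕ} (k : Fin (n+1) → ZLat 2) (l : ZLat 2) : 0 ≤ X2 k l := by
  unfold X2
  have := nsq_nonneg (k 0 - l)
  have := nsq_nonneg l
  have : 0 ≤ ∑ a : Fin n, nsq (k a.succ) := Finset.sum_nonneg fun _ _ => nsq_nonneg _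
  linarith

lemma Y2_nonneg {n : ℕ} (w : Fin 2 → ℝ) (k : Fin (n+1) → ZLat 2) (l : ZLat 2) : 0 ≤ Y2 w k l := by
  unfold Y2; positivity

lemma YG_nonneg {n : ℕ} (w : Fin 2 → ℝ) (ε : ℝ) (k : Fin (n+1) → ZLat 2) (l : ZLat 2) :
    0 ≤ Y2 w k l * Gfun (wnSq w) (Leps ε (X2 k l / 2)) := by
  apply mul_nonneg (Y2_nonneg w k l)
  apply Gfun_nonneg
  · unfold wnSq; positivity
  · exact Leps_nonneg _ _ (by have := X2_nonneg k l; positivity)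

lemma sig2_nonneg {n : ℕ} (w : Fin 2 → ℝ) (ε : ℝ) (k : Fin (n+1) → ZLat 2) (l : ZLat 2) :
    0 ≤ sig2 w ε k l := by
  unfold sig2
  have := X2_nonneg k l
  have := YG_nonneg w ε k l
  positivity

lemma V2_nonneg {n : ℕ} (k : Fin (n+1) → ZLat 2) (l : ZLat 2) : 0 ≤ V2 k l := by
  unfold V2
  apply Finset.sum_nonneg
  intro a _
  have := eN_nonneg (k a.succ)
  have := eN_nonneg (k 0 - l)
  have := eN_nonneg l
  positivity

lemma off_sum {n : ℕ} (w : Fin 2 → ℝ) (ε : ℝ) (k : Fin (n+1) → ZLat 2) (S : Finset (ZLat 2))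
    (hS : ∀ l ∈ S, l ≠ 0 ∧ k 0 - l ≠ 0) :
    ∑ l ∈ S, sig2 w ε k l * V2 k l ≤ 64 * n := by
  unfold V2
  simp_rw [Finset.mul_sum]
  rw [Finset.sum_comm]
  have key : ∀ a : Fin n, ∑ l ∈ S, sig2 w ε k l * (eN (k a.succ) * (1 / eN (k 0 - l) + 1 / eN l)) ≤ 64 := by
    intro a
    by_cases h0 : k a.succ = 0
    · rw [h0, eN_zero]; simp
    set b := eN (k a.succ) with hb
    have hb1 : 1 ≤ b := one_le_eN _ h0
    have hX : ∀ l, nsq l + nsq (k 0 - l) + b ^ 2 ≤ X2 k l := by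
      intro l
      have : nsq (k a.succ) ≤ ∑ a : Fin n, nsq (k a.succ) :=
        Finset.single_le_sum (f := fun a : Fin n => nsq (k a.succ)) (fun _ _ => nsq_nonneg _) (Finset.mem_univ a)
      unfold X2
      rw [hb, eN_sq]; linarith
    have hs : ∀ l x, 0 ≤ x → x + b ^ 2 ≤ X2 k l → sig2 w ε k l ≤ 2 / (x + b ^ 2) := by
      intro l x hx hxx
      unfold sig2
      have := YG_nonneg w ε k l
      exact div_le_div_of_nonneg_left (by norm_num) (by positivity) (by linarith)
    have h1 := box_sum b hb1 S (fun l hl => (hS l hl).1)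
    have h2 := box_sum b hb1 (S.image fun l => k 0 - l) (by
      intro l hl
      obtain ⟨l', hl', rfl⟩ := Finset.mem_image.1 hl
      exact (hS l' hl').2)
    rw [Finset.sum_image (by intro x _ y _ h; simpa using h)] at h2
    have : ∀ l ∈ S, sig2 w ε k l * (b * (1 / eN (k 0 - l) + 1 / eN l)) ≤
        2 * (b / (eN l * (nsq l + b ^ 2))) + 2 * (b / (eN (k 0 - l) * (nsq (k 0 - l) + b ^ 2))) := by
      intro l hl
      have e1 := hs l (nsq l) (nsq_nonneg l) (by linarith [hX l, nsq_nonneg (k 0 - l)])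
      have e2 := hs l (nsq (k 0 - l)) (nsq_nonneg _) (by linarith [hX l, nsq_nonneg l])
      have p1 := one_le_eN l (hS l hl).1
      have p2 := one_le_eN _ (hS l hl).2
      have q1 := nsq_nonneg l
      have q2 := nsq_nonneg (k 0 - l)
      calc _ = sig2 w ε k l * (b / eN l) + sig2 w ε k l * (b / eN (k 0 - l)) := by ring
        _ ≤ 2 / (nsq l + b ^ 2) * (b / eN l) + 2 / (nsq (k 0 - l) + b ^ 2) * (b / eN (k 0 - l)) := by
            gcongr
        _ = _ := by field_simp
    refine (Finset.sum_le_sum this).trans ?_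
    rw [Finset.sum_add_distrib, ← Finset.mul_sum, ← Finset.mul_sum]
    linarith
  refine (Finset.sum_le_sum fun a _ => key a).trans ?_
  simp; linarith

lemma sig2_le {n : ℕ} (w : Fin 2 → ℝ) (ε : ℝ) (k : Fin (n+1) → ZLat 2) (l : ZLat 2) (hl : l ≠ 0) :
    sig2 w ε k l ≤ 1 / (X2 k l / 2 +
        (w 0 * ((l 0 : ℝ) - (k 0 0 : ℝ) / 2) + w 1 * ((l 1 : ℝ) - (k 0 1 : ℝ) / 2)) ^ 2 *
          Gfun (wnSq w) (Leps ε (X2 k l / 2))) := by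
  have hX : 1 ≤ X2 k l := by
    unfold X2
    have := nsq_nonneg (k 0 - l)
    have := one_le_nsq l hl
    have : 0 ≤ ∑ a : Fin n, nsq (k a.succ) := Finset.sum_nonneg fun _ _ => nsq_nonneg _
    linarith
  have hG : 0 ≤ Gfun (wnSq w) (Leps ε (X2 k l / 2)) := by
    apply Gfun_nonneg
    · unfold wnSq; positivity
    · exact Leps_nonneg _ _ (by positivity)
  set g := Gfun (wnSq w) (Leps ε (X2 k l / 2))
  set v := (w 0 * ((l 0 : ℝ) - (k 0 0 : ℝ) / 2) + w 1 * ((l 1 : ℝ) - (k 0 1 : ℝ) / 2)) ^ 2 with hv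
  have hv0 : 0 ≤ v := sq_nonneg _
  have hY : 2 * v ≤ Y2 w k l := by
    unfold Y2
    have h1 : 0 ≤ ∑ a : Fin n, dotw w (k a.succ) ^ 2 := by positivity
    have h2 : 2 * v ≤ dotw w (k 0 - l) ^ 2 + dotw w l ^ 2 := by
      simp only [dotw, Fin.sum_univ_two, Pi.sub_apply, Int.cast_sub, hv]
      nlinarith [sq_nonneg (w 0 * (k 0 0 : ℝ) + w 1 * (k 0 1 : ℝ))]
    linarith
  have : sig2 w ε k l ≤ 2 / (X2 k l + 2 * v * g) := by
    unfold sig2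
    gcongr
  refine this.trans (le_of_eq ?_)
  field_simp

lemma fiber (w : Fin 2 → ℝ) (hw : w ≠ 0) (n M : ℕ) (δ : ℝ) (hδ : 0 < δ) :
    ∃ ε₂ : ℝ, 0 < ε₂ ∧ ∀ ε, 0 < ε → ε < ε₂ → ∀ k : Fin (n+1) → ZLat 2,
      (lam 2 ε) ^ 2 / Real.pi ^ 2 * ∑ l ∈ cutS ε, Jind 2 ε (k 0 - l) l * (sig2 w ε k l * (1 + M * V2 k l)) ≤
        Gfun (wnSq w) (Leps ε (wSq k / 2)) + δ := by
  have hw2 := wnSq_pos w hw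
  have hw2' := hw2
  rw [wnSq_two] at hw2'
  obtain ⟨K, hK, hmain⟩ := main_sum w hw2'
  rw [← wnSq_two] at hmain
  set B := (K + 64 * M * n) / δ with hB
  have hB0 : 0 ≤ B := by positivity
  refine ⟨min (1/3) (Real.exp (-B)), by positivity, ?_⟩
  intro ε hε hε2 k
  have h3 : ε < 1 / 3 := hε2.trans_le (min_le_left _ _)
  have hexp : ε < Real.exp (-B) := hε2.trans_le (min_le_right _ _)
  have hlogpos : 0 < Real.log (1 / ε ^ 2) := by
    apply Real.log_pos
    rw [lt_div_iff₀ (by positivity)]; nlinarith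
  have hlog : B ≤ Real.log (1 / ε ^ 2) := by
    have h1 : Real.log ε < -B := by
      rw [Real.log_lt_iff_lt_exp hε]; exact hexp
    rw [one_div, Real.log_inv, Real.log_pow]; push_cast; linarith
  have hΛ : (lam 2 ε) ^ 2 * (K + 64 * M * n) ≤ δ := by
    rw [lam_sq ε hε (by linarith), inv_mul_le_iff₀ hlogpos]
    rw [hB, div_le_iff₀ hδ] at hlog
    exact hlog
  have hGnn : 0 ≤ Gfun (wnSq w) (Leps ε (wSq k / 2)) := by
    apply Gfun_nonneg _ _ hw2.le (Leps_nonneg _ _ _)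
    have : 0 ≤ wSq k := Finset.sum_nonneg fun _ _ => nsq_nonneg _
    positivity
  set S := (cutS ε).filter (fun l => Jind 2 ε (k 0 - l) l ≠ 0) with hS
  have hSum : ∑ l ∈ cutS ε, Jind 2 ε (k 0 - l) l * (sig2 w ε k l * (1 + M * V2 k l)) =
      ∑ l ∈ S, (sig2 w ε k l + M * (sig2 w ε k l * V2 k l)) := by
    rw [hS, Finset.sum_filter]
    apply Finset.sum_congr rfl
    intro l _
    rcases Jind_cases ε (k 0 - l) l with h | h
    · simp [h]
    · simp [h]; ring
  have hSp : ∀ l ∈ S, k 0 - l ≠ 0 ∧ l ≠ 0 ∧ k 0 - l + l ≠ 0 ∧ nsq (k 0 - l) ≤ 1 / ε ^ 2 ∧ nsq l ≤ 1 / ε ^ 2 := by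
    intro l hl
    exact Jind_ne ε hε _ _ (Finset.mem_filter.1 hl).2
  rw [hSum]
  by_cases hk : k 0 = 0
  · have : S = ∅ := by
      rw [Finset.eq_empty_iff_forall_notMem]
      intro l hl
      have := (hSp l hl).2.2.1
      rw [hk] at this; simp at this
    rw [this]; simp; linarith
  set R := ∑ a : Fin n, nsq (k a.succ) with hR
  have hR0 : 0 ≤ R := Finset.sum_nonneg fun _ _ => nsq_nonneg _
  have hwSq : wSq k = nsq (k 0) + R := by
    unfold wSq; rw [Fin.sum_univ_succ]
  have hXl : ∀ l, nsq l + nsq (k 0 - l) + R = X2 k l := by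
    intro l; unfold X2; ring
  have hm := hmain ε hε h3 (k 0) R hk hR0 S (fun l hl => ⟨(hSp l hl).2.2.2.2, (hSp l hl).2.2.2.1⟩)
    _ (fun l _ => rfl)
  simp_rw [hXl] at hm
  rw [← hwSq] at hm
  have hs1 : ∑ l ∈ S, sig2 w ε k l ≤ _ := Finset.sum_le_sum fun l hl => sig2_le w ε k l (hSp l hl).2.1
  have hs2 := off_sum w ε k S (fun l hl => ⟨(hSp l hl).2.1, (hSp l hl).1⟩)
  rw [Finset.sum_add_distrib, ← Finset.mul_sum, mul_add]
  have hpi : 1 ≤ Real.pi ^ 2 := by nlinarith [Real.pi_gt_three]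
  have hL0 : 0 ≤ (lam 2 ε) ^ 2 / Real.pi ^ 2 := by positivity
  have hL1 : (lam 2 ε) ^ 2 / Real.pi ^ 2 ≤ (lam 2 ε) ^ 2 := div_le_self (sq_nonneg _) hpi
  have t1 := mul_le_mul_of_nonneg_left hs1 hL0
  have t2 : (lam 2 ε) ^ 2 / Real.pi ^ 2 * (M * ∑ l ∈ S, sig2 w ε k l * V2 k l) ≤
      (lam 2 ε) ^ 2 * (M * (64 * n)) := by
    have : 0 ≤ ∑ l ∈ S, sig2 w ε k l * V2 k l :=
      Finset.sum_nonneg fun l _ => mul_nonneg (sig2_nonneg w ε k l) (V2_nonneg k l)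
    gcongr
  have t3 := t1.trans hm
  nlinarith

abbrev Pr (n : ℕ) := {p : Fin (n+2) × Fin (n+2) // p.1 < p.2}

def emb {n : ℕ} (P : Pr n) : Fin n → Fin (n+2) :=
  remove2 (fun a => a) P.1.1 P.1.2 P.2

lemma remove2_eq {X : Type*} {n : ℕ} (k : Fin (n+2) → X) (P : Pr n) (a : Fin n) :
    remove2 k P.1.1 P.1.2 P.2 a = k (emb P a) := rfl

def kk {n : ℕ} (P : Pr n) (k : Fin (n+2) → ZLat 2) : Fin (n+1) → ZLat 2 :=
  Fin.cons (k P.1.1 + k P.1.2) (remove2 k P.1.1 P.1.2 P.2)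

lemma kk_zero {n : ℕ} (P : Pr n) (k : Fin (n+2) → ZLat 2) : kk P k 0 = k P.1.1 + k P.1.2 := rfl
lemma kk_succ {n : ℕ} (P : Pr n) (k : Fin (n+2) → ZLat 2) (a : Fin n) :
    kk P k a.succ = k (emb P a) := rfl

lemma castLT_succAbove {n : ℕ} (P : Pr n) :
    P.1.2.succAbove (Fin.castLT P.1.1
    (Nat.lt_of_lt_of_le (Fin.lt_def.mp P.2) (Nat.lt_succ_iff.mp P.1.2.isLt))) = P.1.1 := by
  rw [Fin.succAbove_of_castSucc_lt]
  · simp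
  · simpa using P.2

lemma sum_split {n : ℕ} (P : Pr n) (φ : Fin (n+2) → ℝ) :
    ∑ a, φ a = φ P.1.1 + φ P.1.2 + ∑ a, φ (emb P a) := by
  rw [Fin.sum_univ_succAbove _ P.1.2, Fin.sum_univ_succAbove _ (Fin.castLT P.1.1
    (Nat.lt_of_lt_of_le (Fin.lt_def.mp P.2) (Nat.lt_succ_iff.mp P.1.2.isLt))), castLT_succAbove]
  simp only [emb, remove2]
  ring

lemma emb_inj {n : ℕ} (P : Pr n) : Function.Injective (emb P) := by
  intro a b h
  simp only [emb, remove2] at h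
  exact Fin.succAbove_right_injective (Fin.succAbove_right_injective h)

lemma emb_range {n : ℕ} (P : Pr n) (d : Fin (n+2)) : (∃ a, emb P a = d) ↔ d ≠ P.1.1 ∧ d ≠ P.1.2 := by
  constructor
  · rintro ⟨a, rfl⟩
    simp only [emb, remove2]
    refine ⟨?_, Fin.succAbove_ne _ _⟩
    intro h
    have h2 := h.trans (castLT_succAbove P).symm
    exact Fin.succAbove_ne _ _ (Fin.succAbove_right_injective h2)
  · rintro ⟨h1, h2⟩
    obtain ⟨b, hb⟩ := Fin.exists_succAbove_eq h2
    have h3 : b ≠ (Fin.castLT P.1.1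
      (Nat.lt_of_lt_of_le (Fin.lt_def.mp P.2) (Nat.lt_succ_iff.mp P.1.2.isLt))) := by
      rintro rfl
      apply h1
      rw [← hb, castLT_succAbove]
    obtain ⟨a, ha⟩ := Fin.exists_succAbove_eq h3
    exact ⟨a, by simp only [emb, remove2]; rw [ha, hb]⟩

lemma kk_inj {n : ℕ} (P : Pr n) : Function.Injective (fun k : Fin (n+2) → ZLat 2 => (kk P k, k P.1.2)) := by
  intro k k' h
  simp only [Prod.mk.injEq] at h
  obtain ⟨h1, h2⟩ := h
  have h3 : k P.1.1 = k' P.1.1 := by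
    have := congrFun h1 0
    rw [kk_zero, kk_zero, h2] at this
    exact add_right_cancel this
  funext d
  by_cases e1 : d = P.1.1
  · rw [e1, h3]
  by_cases e2 : d = P.1.2
  · rw [e2, h2]
  obtain ⟨a, rfl⟩ := (emb_range P d).2 ⟨e1, e2⟩
  have := congrFun h1 a.succ
  rwa [kk_succ, kk_succ] at this

lemma sum_pairs {n : ℕ} {E : Type*} [AddCommMonoid E] (g : Pr n → E) :
    (∑ i : Fin (n+2), ∑ j : Fin (n+2), if h : i < j then g ⟨(i, j), h⟩ else 0) = ∑ P, g P := by
  rw [← Fintype.sum_prod_type' (f := fun i j : Fin (n+2) => if h : i < j then g ⟨(i, j), h⟩ else 0)]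
  rw [← Fintype.sum_subtype_add_sum_subtype (fun p : Fin (n+2) × Fin (n+2) => p.1 < p.2)]
  rw [Finset.sum_congr (g := g) rfl, Finset.sum_eq_zero (s := (Finset.univ : Finset {p : Fin (n+2) × Fin (n+2) // ¬ p.1 < p.2})), add_zero]
  · intro x _
    rw [dif_neg x.2]
  · intro x _
    rw [dif_pos x.2]

lemma card_Pr (n : ℕ) : 2 * (Fintype.card (Pr n) : ℝ) = ((n:ℝ) + 2) * ((n:ℝ) + 1) := by
  have h := sum_pairs (n := n) (fun _ => (1:ℝ))
  have h1 : (Fintype.card (Pr n) : ℝ) = ∑ i : Fin (n+2), ∑ j : Fin (n+2), if i < j then (1:ℝ) else 0 := by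
    rw [show (∑ i : Fin (n+2), ∑ j : Fin (n+2), if i < j then (1:ℝ) else 0) = _ from h]; simp
  have h2 : (Fintype.card (Pr n) : ℝ) = ∑ i : Fin (n+2), ∑ j : Fin (n+2), if j < i then (1:ℝ) else 0 := by
    rw [h1, Finset.sum_comm]
  have h3 : (∑ i : Fin (n+2), ∑ j : Fin (n+2), if i = j then (1:ℝ) else 0) = n + 2 := by simp
  have h4 : (∑ i : Fin (n+2), ∑ j : Fin (n+2), (1:ℝ)) = (n + 2) * (n + 2) := by simp; ring
  have h5 : (∑ i : Fin (n+2), ∑ j : Fin (n+2), (1:ℝ)) = Fintype.card (Pr n) + Fintype.card (Pr n) + (n + 2) := by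
    nth_rewrite 1 [h1]
    rw [h2, ← h3, ← Finset.sum_add_distrib, ← Finset.sum_add_distrib]
    refine Finset.sum_congr rfl fun i _ => ?_
    rw [← Finset.sum_add_distrib, ← Finset.sum_add_distrib]
    refine Finset.sum_congr rfl fun j _ => ?_
    rcases lt_trichotomy i j with h | h | h
    · simp [h, h.not_gt, h.ne]
    · simp [h]
    · simp [h, h.not_gt, h.ne']
  rw [h4] at h5
  linarith

/-- summand of `A⁺` -/
def TT {n : ℕ} (w : Fin 2 → ℝ) (ε : ℝ) (f : Chaos 2 (n+1)) (k : Fin (n+2) → ZLat 2) (P : Pr n) : ℂ :=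
  ((dotw w (k P.1.1 + k P.1.2) : ℝ) : ℂ) * ((Jind 2 ε (k P.1.1) (k P.1.2) : ℝ) : ℂ) * f (kk P k)

lemma Aplus_eq {n : ℕ} (w : Fin 2 → ℝ) (ε : ℝ) (f : Chaos 2 (n+1)) (k : Fin (n+2) → ZLat 2) :
    Aplus 2 w ε f k = -(2 * Complex.I / (((2*Real.pi) ^ (((2:ℕ):ℝ)/2) : ℝ) : ℂ)) *
      ((lam 2 ε / ((n:ℝ)+2) : ℝ) : ℂ) * ∑ P, TT w ε f k P := by
  rw [← sum_pairs]
  rfl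

lemma Aplus_norm {n : ℕ} (w : Fin 2 → ℝ) (ε : ℝ) (f : Chaos 2 (n+1)) (k : Fin (n+2) → ZLat 2) :
    ‖Aplus 2 w ε f k‖ ^ 2 = (lam 2 ε) ^ 2 / Real.pi ^ 2 / ((n:ℝ)+2) ^ 2 * ‖∑ P, TT w ε f k P‖ ^ 2 := by
  rw [Aplus_eq]
  have : (2 * Real.pi) ^ (((2:ℕ):ℝ)/2) = 2 * Real.pi := by norm_num
  rw [this]
  simp only [norm_mul, norm_neg, norm_div, Complex.norm_I, Complex.norm_real, Complex.norm_ofNat, mul_pow,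
    div_pow, Real.norm_eq_abs, sq_abs, Complex.ofReal_mul, Complex.ofReal_ofNat, Complex.ofReal_div]
  have hpi := Real.pi_pos
  field_simp

/-! symmetry -/

lemma dotw_add_comm (w : Fin 2 → ℝ) (a b : ZLat 2) : dotw w (a + b) = dotw w (b + a) := by
  rw [add_comm]

lemma Jind_comm (ε : ℝ) (a b : ZLat 2) : Jind 2 ε a b = Jind 2 ε b a := by
  unfold Jind
  rw [add_comm a b]
  congr 1
  apply propext
  tauto

lemma exists_perm {α β : Type*} (e e' : α → β) (he : Function.Injective e) (he' : Function.Injective e')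
    (h : Set.range e = Set.range e') : ∃ ρ : Equiv.Perm α, e = e' ∘ ρ := by
  refine ⟨(Equiv.ofInjective e he).trans ((Equiv.setCongr h).trans (Equiv.ofInjective e' he').symm), ?_⟩
  funext a
  simp only [Function.comp_apply, Equiv.trans_apply]
  rw [Equiv.apply_ofInjective_symm he']
  rfl

lemma symm_cons {n : ℕ} (f : Chaos 2 (n+1)) (hf : Symm f) (s : ZLat 2) (r : Fin n → ZLat 2)
    (ρ : Equiv.Perm (Fin n)) : f (Fin.cons s (r ∘ ρ)) = f (Fin.cons s r) := by
  rw [← hf (Equiv.Perm.decomposeFin.symm (0, ρ)) (Fin.cons s r)]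
  congr 1
  funext a
  refine Fin.cases ?_ (fun b => ?_) a
  · simp
  · simp

def actP {n : ℕ} (τ : Equiv.Perm (Fin (n+2))) (P : Pr n) : Pr n :=
  if h : τ P.1.1 < τ P.1.2 then ⟨(τ P.1.1, τ P.1.2), h⟩ else ⟨(τ P.1.2, τ P.1.1), by
    rcases lt_trichotomy (τ P.1.1) (τ P.1.2) with h' | h' | h'
    · exact absurd h' h
    · exact absurd (τ.injective h') P.2.ne
    · exact h'⟩

lemma actP_bij {n : ℕ} (τ : Equiv.Perm (Fin (n+2))) : Function.Bijective (actP (n := n) τ) := by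
  rw [← Finite.injective_iff_bijective]
  rintro ⟨⟨i, j⟩, h⟩ ⟨⟨i', j'⟩, h'⟩ e
  unfold actP at e
  simp only at h h' e
  split_ifs at e with h1 h2 h2 <;> simp only [Subtype.mk.injEq, Prod.mk.injEq, EmbeddingLike.apply_eq_iff_eq] at e
  · simp [e.1, e.2]
  · exfalso; rw [e.1, e.2] at h; exact lt_asymm h h'
  · exfalso; rw [e.1, e.2] at h; exact lt_asymm h h'
  · simp [e.1, e.2]

lemma f_perm {n : ℕ} (f : Chaos 2 (n+1)) (hf : Symm f) (τ : Equiv.Perm (Fin (n+2))) (P Q : Pr n)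
    (k : Fin (n+2) → ZLat 2) (s : ZLat 2)
    (h : ∀ d, (d ≠ Q.1.1 ∧ d ≠ Q.1.2) ↔ (d ≠ τ P.1.1 ∧ d ≠ τ P.1.2)) :
    f (Fin.cons s (fun a => k (τ (emb P a)))) = f (Fin.cons s (fun a => k (emb Q a))) := by
  obtain ⟨ρ, hρ⟩ := exists_perm (τ ∘ emb P) (emb Q) (τ.injective.comp (emb_inj P)) (emb_inj Q) (by
    ext d
    simp only [Set.mem_range, Function.comp_apply]
    rw [emb_range Q d, h d]
    have := emb_range P (τ.symm d)
    constructor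
    · rintro ⟨a, rfl⟩
      have h2 := (emb_range P (emb P a)).1 ⟨a, rfl⟩
      exact ⟨fun e => h2.1 (τ.injective e), fun e => h2.2 (τ.injective e)⟩
    · rintro ⟨h1, h2⟩
      obtain ⟨a, ha⟩ := this.2 ⟨fun e => h1 (by rw [← e]; simp), fun e => h2 (by rw [← e]; simp)⟩
      exact ⟨a, by rw [ha]; simp⟩)
  have h2 : (fun a => k (τ (emb P a))) = (fun a => k (emb Q a)) ∘ ρ := by
    funext a
    have := congrFun hρ a
    simp only [Function.comp_apply] at this ⊢
    rw [this]
  rw [h2, symm_cons f hf]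

lemma Aplus_symm {n : ℕ} (w : Fin 2 → ℝ) (ε : ℝ) (f : Chaos 2 (n+1)) (hf : Symm f) :
    Symm (Aplus 2 w ε f) := by
  intro τ k
  rw [Aplus_eq, Aplus_eq]
  congr 1
  apply Fintype.sum_bijective (actP τ) (actP_bij τ)
  intro P
  unfold TT
  by_cases h : τ P.1.1 < τ P.1.2
  · have e : actP τ P = ⟨(τ P.1.1, τ P.1.2), h⟩ := by unfold actP; rw [dif_pos h]
    have h2 := f_perm f hf τ P (actP τ P) k (k (τ P.1.1) + k (τ P.1.2)) (by intro d; rw [e])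
    have h3 : f (kk P (k ∘ τ)) = f (kk (actP τ P) k) := by
      refine Eq.trans ?_ (h2.trans ?_)
      · rfl
      · rw [e]; rfl
    rw [h3, e]; rfl
  · have e : (actP τ P).1 = (τ P.1.2, τ P.1.1) := by unfold actP; rw [dif_neg h]
    have h2 := f_perm f hf τ P (actP τ P) k (k (τ P.1.1) + k (τ P.1.2)) (by intro d; rw [e]; tauto)
    have h3 : f (kk P (k ∘ τ)) = f (kk (actP τ P) k) := by
      refine Eq.trans ?_ (h2.trans ?_)
      · rfl
      · have : kk (actP τ P) k = Fin.cons (k (actP τ P).1.1 + k (actP τ P).1.2) (fun a => k (emb (actP τ P) a)) := rfl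
        rw [this, e, add_comm (k (τ P.1.1)) (k (τ P.1.2))]
    rw [h3, e, dotw_add_comm, Jind_comm]; rfl

lemma wSq_comp {n : ℕ} (k : Fin n → ZLat 2) (τ : Equiv.Perm (Fin n)) : wSq (k ∘ τ) = wSq k := by
  unfold wSq; exact Equiv.sum_comp τ (fun a => nsq (k a))

lemma wdotSq_comp {n : ℕ} (w : Fin 2 → ℝ) (k : Fin n → ZLat 2) (τ : Equiv.Perm (Fin n)) :
    wdotSq w (k ∘ τ) = wdotSq w k := by
  unfold wdotSq; exact Equiv.sum_comp τ (fun a => dotw w (k a) ^ 2)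

lemma sigma_comp {n : ℕ} (w : Fin 2 → ℝ) (ε : ℝ) (k : Fin n → ZLat 2) (τ : Equiv.Perm (Fin n)) :
    sigma' w ε (k ∘ τ) = sigma' w ε k := by
  unfold sigma'; rw [wSq_comp, wdotSq_comp]

lemma sq_sum_le {ι : Type*} [Fintype ι] (t V : ι → ℝ) (hV : ∀ P, 0 ≤ V P)
    (h : ∀ P Q, P ≠ Q → t P * t Q ≤ 1/2 * (V P * t P ^ 2 + V Q * t Q ^ 2)) :
    (∑ P, t P) ^ 2 ≤ ∑ P, (1 + Fintype.card ι * V P) * t P ^ 2 := by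
  have h1 : ∀ P Q, t P * t Q ≤ (if P = Q then t P ^ 2 else 0) + 1/2 * (V P * t P ^ 2 + V Q * t Q ^ 2) := by
    intro P Q
    by_cases e : P = Q
    · subst e
      have := hV P
      have : 0 ≤ V P * t P ^ 2 := by positivity
      simp only [if_true]
      nlinarith
    · simp only [e, if_false, zero_add]
      exact h P Q e
  calc (∑ P, t P) ^ 2 = ∑ P, ∑ Q, t P * t Q := by rw [sq, Finset.sum_mul_sum]
    _ ≤ ∑ P, ∑ Q, ((if P = Q then t P ^ 2 else 0) + 1/2 * (V P * t P ^ 2 + V Q * t Q ^ 2)) :=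
        Finset.sum_le_sum fun P _ => Finset.sum_le_sum fun Q _ => h1 P Q
    _ = _ := by
        simp only [Finset.sum_add_distrib, Finset.sum_ite_eq, Finset.mem_univ, if_true, ← Finset.mul_sum,
          Finset.sum_const, Finset.card_univ, nsmul_eq_mul, add_mul, one_mul, mul_assoc]
        have e : ∑ x, V x * (Fintype.card ι : ℝ) * t x ^ 2 = (Fintype.card ι : ℝ) * ∑ x, V x * t x ^ 2 := by
          rw [Finset.mul_sum]
          refine Finset.sum_congr rfl fun x _ => ?_
          ring
        ring_nf
        rw [e]
        ring

lemma V2_kk {n : ℕ} (P : Pr n) (k : Fin (n+2) → ZLat 2) :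
    V2 (kk P k) (k P.1.2) = ∑ a : Fin n, eN (k (emb P a)) * (1 / eN (k P.1.1) + 1 / eN (k P.1.2)) := by
  unfold V2
  simp only [kk_zero, kk_succ, add_sub_cancel_right]

lemma V2_ge {n : ℕ} (P : Pr n) (k : Fin (n+2) → ZLat 2) (b d : Fin (n+2))
    (hb : b = P.1.1 ∨ b = P.1.2) (hd : d ≠ P.1.1 ∧ d ≠ P.1.2) :
    eN (k d) / eN (k b) ≤ V2 (kk P k) (k P.1.2) := by
  rw [V2_kk]
  obtain ⟨a, rfl⟩ := (emb_range P d).2 hd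
  have n1 := eN_nonneg (k P.1.1)
  have n2 := eN_nonneg (k P.1.2)
  refine le_trans ?_ (Finset.single_le_sum (f := fun a => eN (k (emb P a)) * (1 / eN (k P.1.1) + 1 / eN (k P.1.2)))
    (fun a _ => ?_) (Finset.mem_univ a))
  · have := eN_nonneg (k (emb P a))
    rw [div_eq_mul_one_div]
    apply mul_le_mul_of_nonneg_left _ this
    have m1 : 0 ≤ 1 / eN (k P.1.1) := by positivity
    have m2 : 0 ≤ 1 / eN (k P.1.2) := by positivity
    rcases hb with rfl | rfl <;> linarith
  · have := eN_nonneg (k (emb P a))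
    positivity

lemma pair_diff {n : ℕ} (P Q : Pr n) (h : P ≠ Q) :
    ∃ b, (b = P.1.1 ∨ b = P.1.2) ∧ (b ≠ Q.1.1 ∧ b ≠ Q.1.2) := by
  obtain ⟨⟨p1, p2⟩, hp⟩ := P
  obtain ⟨⟨q1, q2⟩, hq⟩ := Q
  simp only [ne_eq, Subtype.mk.injEq, Prod.mk.injEq] at *
  by_contra hc
  push Not at hc
  have h1 := hc p1 (Or.inl rfl)
  have h2 := hc p2 (Or.inr rfl)
  apply h
  by_cases e1 : p1 = q1
  · refine ⟨e1, h2 ?_⟩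
    rintro rfl
    exact hp.ne e1
  · have e2 := h1 e1
    by_cases e3 : p2 = q1
    · exfalso
      rw [e2, e3] at hp
      exact lt_asymm hp hq
    · exact absurd (e2.trans (h2 e3).symm) hp.ne

lemma TT_ne {n : ℕ} (w : Fin 2 → ℝ) (ε : ℝ) (hε : 0 < ε) (f : Chaos 2 (n+1)) (k : Fin (n+2) → ZLat 2) (P : Pr n)
    (h : ‖TT w ε f k P‖ ≠ 0) (b : Fin (n+2)) (hb : b = P.1.1 ∨ b = P.1.2) : 0 < eN (k b) := by
  have hJ : Jind 2 ε (k P.1.1) (k P.1.2) ≠ 0 := by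
    intro e
    apply h
    unfold TT
    rw [e]; simp
  obtain ⟨h1, h2, -⟩ := Jind_ne ε hε _ _ hJ
  rcases hb with rfl | rfl
  · linarith [one_le_eN _ h1]
  · linarith [one_le_eN _ h2]

lemma cross {n : ℕ} (w : Fin 2 → ℝ) (ε : ℝ) (hε : 0 < ε) (f : Chaos 2 (n+1)) (k : Fin (n+2) → ZLat 2) (P Q : Pr n)
    (h : P ≠ Q) : ‖TT w ε f k P‖ * ‖TT w ε f k Q‖ ≤
      1/2 * (V2 (kk P k) (k P.1.2) * ‖TT w ε f k P‖ ^ 2 + V2 (kk Q k) (k Q.1.2) * ‖TT w ε f k Q‖ ^ 2) := by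
  have vP := V2_nonneg (kk P k) (k P.1.2)
  have vQ := V2_nonneg (kk Q k) (k Q.1.2)
  by_cases hP : ‖TT w ε f k P‖ = 0
  · rw [hP, zero_mul]; positivity
  by_cases hQ : ‖TT w ε f k Q‖ = 0
  · rw [hQ, mul_zero]; positivity
  obtain ⟨b, hb, hb'⟩ := pair_diff P Q h
  obtain ⟨d, hd, hd'⟩ := pair_diff Q P h.symm
  have p1 := TT_ne w ε hε f k P hP b hb
  have p2 := TT_ne w ε hε f k Q hQ d hd
  have g1 := V2_ge P k b d hb hd'
  have g2 := V2_ge Q k d b hd hb'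
  set x := ‖TT w ε f k P‖
  set y := ‖TT w ε f k Q‖
  have e1 : eN (k d) / eN (k b) * x ^ 2 ≤ V2 (kk P k) (k P.1.2) * x ^ 2 :=
    mul_le_mul_of_nonneg_right g1 (sq_nonneg _)
  have e2 : eN (k b) / eN (k d) * y ^ 2 ≤ V2 (kk Q k) (k Q.1.2) * y ^ 2 :=
    mul_le_mul_of_nonneg_right g2 (sq_nonneg _)
  have e3 : 2 * (x * y) ≤ eN (k d) / eN (k b) * x ^ 2 + eN (k b) / eN (k d) * y ^ 2 := by
    rw [div_mul_eq_mul_div, div_mul_eq_mul_div, div_add_div _ _ p1.ne' p2.ne', le_div_iff₀ (by positivity)]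
    nlinarith [sq_nonneg (eN (k d) * x - eN (k b) * y)]
  linarith

lemma TT_sq {n : ℕ} (w : Fin 2 → ℝ) (ε : ℝ) (f : Chaos 2 (n+1)) (k : Fin (n+2) → ZLat 2) (P : Pr n) :
    ‖TT w ε f k P‖ ^ 2 = dotw w (kk P k 0) ^ 2 * Jind 2 ε (kk P k 0 - k P.1.2) (k P.1.2) * ‖f (kk P k)‖ ^ 2 := by
  unfold TT
  simp only [norm_mul, Complex.norm_real, Real.norm_eq_abs, mul_pow, sq_abs, kk_zero, add_sub_cancel_right,
    Jind_sq]

lemma sigma_kk {n : ℕ} (w : Fin 2 → ℝ) (ε : ℝ) (k : Fin (n+2) → ZLat 2) (P : Pr n) :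
    sigma' w ε k = sig2 w ε (kk P k) (k P.1.2) := by
  have e1 : wSq k = X2 (kk P k) (k P.1.2) := by
    unfold wSq X2
    rw [sum_split P]
    simp only [kk_zero, kk_succ, add_sub_cancel_right]
  have e2 : wdotSq w k = Y2 w (kk P k) (k P.1.2) := by
    unfold wdotSq Y2
    rw [sum_split P]
    simp only [kk_zero, kk_succ, add_sub_cancel_right]
  unfold sigma' sig2
  rw [e1, e2]

lemma sigma_nonneg {n : ℕ} (w : Fin 2 → ℝ) (ε : ℝ) (k : Fin n → ZLat 2) : 0 ≤ sigma' w ε k := by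
  unfold sigma'
  have h1 : 0 ≤ wSq k := Finset.sum_nonneg fun _ _ => nsq_nonneg _
  have h2 : 0 ≤ wdotSq w k := Finset.sum_nonneg fun _ _ => sq_nonneg _
  have h3 : 0 ≤ Gfun (wnSq w) (Leps ε (wSq k / 2)) := by
    apply Gfun_nonneg
    · unfold wnSq; positivity
    · exact Leps_nonneg _ _ (by positivity)
  positivity

/-- the summand after change of variables -/
def Phi {n : ℕ} (w : Fin 2 → ℝ) (ε : ℝ) (f : Chaos 2 (n+1)) (k : Fin (n+1) → ZLat 2) (l : ZLat 2) : ℝ :=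
  (lam 2 ε) ^ 2 / Real.pi ^ 2 * (dotw w (k 0) ^ 2 * ‖f k‖ ^ 2) * (Jind 2 ε (k 0 - l) l * (sig2 w ε k l *
    (1 + (Fintype.card (Pr n) : ℝ) * V2 k l)))

lemma Phi_nonneg {n : ℕ} (w : Fin 2 → ℝ) (ε : ℝ) (f : Chaos 2 (n+1)) (k : Fin (n+1) → ZLat 2) (l : ZLat 2) :
    0 ≤ Phi w ε f k l := by
  unfold Phi
  have := Jind_nonneg ε (k 0 - l) l
  have := sig2_nonneg w ε k l
  have := V2_nonneg k l
  positivity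

lemma point_bd {n : ℕ} (w : Fin 2 → ℝ) (ε : ℝ) (hε : 0 < ε) (f : Chaos 2 (n+1)) (k : Fin (n+2) → ZLat 2) :
    sigma' w ε k * ‖Aplus 2 w ε f k‖ ^ 2 ≤ 1 / ((n:ℝ)+2) ^ 2 * ∑ P : Pr n, Phi w ε f (kk P k) (k P.1.2) := by
  rw [Aplus_norm]
  have h1 : ‖∑ P, TT w ε f k P‖ ^ 2 ≤ ∑ P : Pr n, (1 + (Fintype.card (Pr n) : ℝ) * V2 (kk P k) (k P.1.2)) * ‖TT w ε f k P‖ ^ 2 := by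
    refine le_trans ?_ (sq_sum_le (fun P => ‖TT w ε f k P‖) (fun P => V2 (kk P k) (k P.1.2))
      (fun P => V2_nonneg _ _) (cross w ε hε f k))
    exact pow_le_pow_left₀ (norm_nonneg _) (norm_sum_le _ _) 2
  have h2 := sigma_nonneg w ε k
  calc _ ≤ sigma' w ε k * ((lam 2 ε) ^ 2 / Real.pi ^ 2 / ((n:ℝ)+2) ^ 2 *
        ∑ P : Pr n, (1 + (Fintype.card (Pr n) : ℝ) * V2 (kk P k) (k P.1.2)) * ‖TT w ε f k P‖ ^ 2) := by gcongr
    _ = _ := by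
      simp only [Finset.mul_sum]
      refine Finset.sum_congr rfl fun P _ => ?_
      rw [TT_sq, sigma_kk w ε k P]
      unfold Phi
      ring

lemma inner_bd {n : ℕ} (w : Fin 2 → ℝ) (ε δ : ℝ) (hε : 0 < ε) (f : Chaos 2 (n+1)) (k : Fin (n+1) → ZLat 2)
    (h : (lam 2 ε)^2/Real.pi^2 * ∑ l ∈ cutS ε, Jind 2 ε (k 0 - l) l * (sig2 w ε k l * (1 + (Fintype.card (Pr n) : ℝ) * V2 k l)) ≤ Gfun (wnSq w) (Leps ε (wSq k/2)) + δ) :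
    ∑' l, ENNReal.ofReal (Phi w ε f k l) ≤
      ENNReal.ofReal (dotw w (k 0) ^ 2 * ((Gfun (wnSq w) (Leps ε (wSq k/2)) + δ) * ‖f k‖ ^ 2)) := by
  rw [tsum_eq_sum (s := cutS ε)]
  · rw [← ENNReal.ofReal_sum_of_nonneg fun l _ => Phi_nonneg w ε f k l]
    apply ENNReal.ofReal_le_ofReal
    unfold Phi
    rw [← Finset.mul_sum]
    calc _ = (dotw w (k 0) ^ 2 * ‖f k‖ ^ 2) * ((lam 2 ε)^2/Real.pi^2 * ∑ l ∈ cutS ε, Jind 2 ε (k 0 - l) l * (sig2 w ε k l * (1 + (Fintype.card (Pr n) : ℝ) * V2 k l))) := by ring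
      _ ≤ (dotw w (k 0) ^ 2 * ‖f k‖ ^ 2) * (Gfun (wnSq w) (Leps ε (wSq k/2)) + δ) := by gcongr
      _ = _ := by ring
  · intro l hl
    have : Jind 2 ε (k 0 - l) l = 0 := by
      by_contra hJ
      obtain ⟨-, -, -, -, h5⟩ := Jind_ne ε hε _ _ hJ
      exact hl (mem_cutS ε hε l h5)
    unfold Phi
    rw [this]; simp

lemma symmetrize {n : ℕ} (w : Fin 2 → ℝ) (X : (Fin (n+1) → ZLat 2) → ℝ) (hX : ∀ k, 0 ≤ X k)
    (hs : ∀ (τ : Equiv.Perm (Fin (n+1))) k, X (k ∘ τ) = X k) :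
    ENNReal.ofReal ((n:ℝ)+1) * ∑' k, ENNReal.ofReal (dotw w (k 0) ^ 2 * X k) =
      ∑' k, ENNReal.ofReal (wdotSq w k * X k) := by
  have h1 : ∀ a : Fin (n+1), ∑' k : Fin (n+1) → ZLat 2, ENNReal.ofReal (dotw w (k a) ^ 2 * X k) =
      ∑' k : Fin (n+1) → ZLat 2, ENNReal.ofReal (dotw w (k 0) ^ 2 * X k) := by
    intro a
    rw [← Equiv.tsum_eq (Equiv.arrowCongr (Equiv.swap 0 a) (Equiv.refl (ZLat 2)))]
    refine tsum_congr fun k => ?_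
    have : (Equiv.arrowCongr (Equiv.swap 0 a) (Equiv.refl (ZLat 2))) k = k ∘ (Equiv.swap 0 a) := by
      funext b; simp [Equiv.arrowCongr]
    rw [this, hs]
    simp
  have h2 : ∀ k, ENNReal.ofReal (wdotSq w k * X k) = ∑ a, ENNReal.ofReal (dotw w (k a) ^ 2 * X k) := by
    intro k
    unfold wdotSq
    rw [Finset.sum_mul, ENNReal.ofReal_sum_of_nonneg]
    intro a _
    have := hX k
    positivity
  simp only [h2]
  rw [Summable.tsum_finsetSum (fun _ _ => ENNReal.summable)]
  simp only [h1]
  rw [Finset.sum_const, Finset.card_univ, Fintype.card_fin, nsmul_eq_mul]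
  congr 1
  rw [← Nat.cast_add_one, ENNReal.ofReal_natCast]

lemma wdotSq_le {n : ℕ} (w : Fin 2 → ℝ) (k : Fin n → ZLat 2) : wdotSq w k ≤ wnSq w * wSq k := by
  unfold wdotSq wSq
  rw [Finset.mul_sum]
  refine Finset.sum_le_sum fun a _ => ?_
  rw [wnSq_two, nsq_two]
  simp only [dotw, Fin.sum_univ_two]
  nlinarith [sq_nonneg (w 0 * (k a 1 : ℝ) - w 1 * (k a 0 : ℝ))]

lemma key (w : Fin 2 → ℝ) (hw : w ≠ 0) (n : ℕ) : ∃ ε₂ : ℝ, 0 < ε₂ ∧ ∀ ε : ℝ, 0 < ε → ε < ε₂ →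
    ∀ f : Chaos 2 (n+1), Symm f →
    ENNReal.ofReal ((n+2).factorial : ℝ) * ∑' k, ENNReal.ofReal (sigma' w ε k * ‖Aplus 2 w ε f k‖ ^ 2) ≤
    ENNReal.ofReal ((n+1).factorial : ℝ) * ∑' k : Fin (n+1) → ZLat 2,
      ENNReal.ofReal ((1/2 * (wdotSq w k * Gfun (wnSq w) (Leps ε (wSq k / 2))) + 1/4 * (wSq k / 2)) * ‖f k‖ ^ 2) := by
  have hc := wnSq_pos w hw
  set δ := 1 / (4 * wnSq w) with hδ
  have hδ0 : 0 < δ := by positivity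
  obtain ⟨ε₂, hε₂, H⟩ := fiber w hw n (Fintype.card (Pr n)) δ hδ0
  refine ⟨ε₂, hε₂, fun ε hε hlt f hf => ?_⟩
  have hw0 : ∀ k : Fin (n+1) → ZLat 2, 0 ≤ wSq k := fun k => Finset.sum_nonneg fun _ _ => nsq_nonneg _
  have hG : ∀ k : Fin (n+1) → ZLat 2, 0 ≤ Gfun (wnSq w) (Leps ε (wSq k / 2)) := by
    intro k
    apply Gfun_nonneg _ _ hc.le
    exact Leps_nonneg _ _ (by have := hw0 k; positivity)
  set X : (Fin (n+1) → ZLat 2) → ℝ := fun k => (Gfun (wnSq w) (Leps ε (wSq k/2)) + δ) * ‖f k‖ ^ 2 with hXdef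
  have hX0 : ∀ k, 0 ≤ X k := by
    intro k; have := hG k; simp only [hXdef]; positivity
  have hXs : ∀ (τ : Equiv.Perm (Fin (n+1))) k, X (k ∘ τ) = X k := by
    intro τ k
    simp only [hXdef]
    rw [wSq_comp, hf τ k]
  have s1 : ∑' k : Fin (n+2) → ZLat 2, ENNReal.ofReal (sigma' w ε k * ‖Aplus 2 w ε f k‖ ^ 2) ≤
      ENNReal.ofReal (1 / ((n:ℝ)+2) ^ 2) * (ENNReal.ofReal (Fintype.card (Pr n) : ℝ) *
        ∑' k : Fin (n+1) → ZLat 2, ENNReal.ofReal (dotw w (k 0) ^ 2 * X k)) := by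
    calc _ ≤ ∑' k : Fin (n+2) → ZLat 2, ENNReal.ofReal (1 / ((n:ℝ)+2) ^ 2) *
          ∑ P : Pr n, ENNReal.ofReal (Phi w ε f (kk P k) (k P.1.2)) := by
          refine ENNReal.tsum_le_tsum fun k => ?_
          rw [← ENNReal.ofReal_sum_of_nonneg (fun P _ => Phi_nonneg w ε f _ _), ← ENNReal.ofReal_mul (by positivity)]
          exact ENNReal.ofReal_le_ofReal (point_bd w ε hε f k)
      _ = ENNReal.ofReal (1 / ((n:ℝ)+2) ^ 2) * ∑ P : Pr n, ∑' k : Fin (n+2) → ZLat 2,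
          ENNReal.ofReal (Phi w ε f (kk P k) (k P.1.2)) := by
          rw [ENNReal.tsum_mul_left, Summable.tsum_finsetSum (fun _ _ => ENNReal.summable)]
      _ ≤ ENNReal.ofReal (1 / ((n:ℝ)+2) ^ 2) * ∑ P : Pr n, ∑' k : Fin (n+1) → ZLat 2, ENNReal.ofReal (dotw w (k 0) ^ 2 * X k) := by
          gcongr with P _
          calc _ ≤ ∑' p : (Fin (n+1) → ZLat 2) × ZLat 2, ENNReal.ofReal (Phi w ε f p.1 p.2) :=
                ENNReal.tsum_comp_le_tsum_of_injective (kk_inj P) (fun p => ENNReal.ofReal (Phi w ε f p.1 p.2))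
            _ = ∑' k, ∑' l, ENNReal.ofReal (Phi w ε f k l) := ENNReal.tsum_prod (f := fun k l => ENNReal.ofReal (Phi w ε f k l))
            _ ≤ _ := ENNReal.tsum_le_tsum fun k => inner_bd w ε δ hε f k (H ε hε hlt k)
      _ = _ := by
          rw [Finset.sum_const, Finset.card_univ, nsmul_eq_mul, ENNReal.ofReal_natCast]
  have s2 : ENNReal.ofReal ((n+2).factorial : ℝ) * (ENNReal.ofReal (1 / ((n:ℝ)+2) ^ 2) * (ENNReal.ofReal (Fintype.card (Pr n) : ℝ) *
        ∑' k : Fin (n+1) → ZLat 2, ENNReal.ofReal (dotw w (k 0) ^ 2 * X k))) =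
      ENNReal.ofReal ((n+1).factorial : ℝ) * (ENNReal.ofReal (1/2) * (ENNReal.ofReal ((n:ℝ)+1) * ∑' k, ENNReal.ofReal (dotw w (k 0) ^ 2 * X k))) := by
    rw [← mul_assoc, ← mul_assoc, ← mul_assoc, ← mul_assoc]
    congr 1
    rw [← ENNReal.ofReal_mul (by positivity), ← ENNReal.ofReal_mul (by positivity), ← ENNReal.ofReal_mul (by positivity), ← ENNReal.ofReal_mul (by positivity)]
    congr 1
    have := card_Pr n
    have e : (Fintype.card (Pr n) : ℝ) = ((n:ℝ) + 2) * ((n:ℝ) + 1) / 2 := by linarith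
    rw [e, Nat.factorial_succ (n+1)]
    push_cast
    field_simp
    ring
  refine le_trans (mul_le_mul_right s1 _) ?_
  rw [s2, symmetrize w X hX0 hXs, ← ENNReal.tsum_mul_left]
  gcongr with k
  rw [← ENNReal.ofReal_mul (by positivity)]
  apply ENNReal.ofReal_le_ofReal
  simp only [hXdef]
  have e1 : wdotSq w k * δ ≤ wSq k / 4 := by
    rw [hδ, mul_one_div, div_le_iff₀ (by positivity)]
    have := wdotSq_le w k
    linarith
  have e2 := mul_le_mul_of_nonneg_right e1 (sq_nonneg ‖f k‖)
  nlinarith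

lemma wSq_nonneg {n : ℕ} (k : Fin n → ZLat 2) : 0 ≤ wSq k := Finset.sum_nonneg fun _ _ => nsq_nonneg _

/-- energy -/
def EA {n : ℕ} (f : Chaos 2 n) : ENNReal :=
  ENNReal.ofReal (n.factorial : ℝ) * ∑' k, ENNReal.ofReal (wSq k / 2 * ‖f k‖ ^ 2)
def EB {n : ℕ} (w : Fin 2 → ℝ) (ε : ℝ) (f : Chaos 2 n) : ENNReal :=
  ENNReal.ofReal (n.factorial : ℝ) *
    ∑' k, ENNReal.ofReal (1/2 * (wdotSq w k * Gfun (wnSq w) (Leps ε (wSq k / 2))) * ‖f k‖ ^ 2)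
def EG {n : ℕ} (f : Chaos 2 n) : ENNReal :=
  ENNReal.ofReal (n.factorial : ℝ) * ∑' k, ENNReal.ofReal ((wSq k / 2)⁻¹ * ‖f k‖ ^ 2)

lemma coord (q Y s a b c : ℝ) (hq : 0 < q) (hs : 0 ≤ s) (hD : s * (q + Y / 2) = 1) (ha : a = s * (b + c)) :
    3/4 * (q * a ^ 2) + 1/2 * Y * a ^ 2 ≤ s * b ^ 2 + 4 * (q⁻¹ * c ^ 2) := by
  have hb : b = (q + Y / 2) * a - c := by
    rw [ha]
    linear_combination -(b + c) * hD
  have h1 : 0 ≤ q⁻¹ * (q * a / 2 - 2 * c) ^ 2 := by positivity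
  have h2 : q⁻¹ * (q * a / 2 - 2 * c) ^ 2 = q / 4 * a ^ 2 - 2 * (a * c) + 4 * (q⁻¹ * c ^ 2) := by
    field_simp
    ring
  have h3 : s * b ^ 2 = (q + Y / 2) * a ^ 2 - 2 * (a * c) + s * c ^ 2 := by
    rw [hb]
    linear_combination ((q + Y / 2) * a ^ 2 - 2 * (a * c)) * hD
  have h4 : 0 ≤ s * c ^ 2 := by positivity
  rw [h2] at h1
  rw [h3]
  linarith

lemma norm_sq_re_im (z : ℂ) : ‖z‖ ^ 2 = z.re ^ 2 + z.im ^ 2 := by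
  rw [Complex.sq_norm, Complex.normSq_apply]; ring

lemma point_u {n : ℕ} (w : Fin 2 → ℝ) (ε : ℝ) (k : Fin n → ZLat 2) (u v g : ℂ)
    (hu : u = ((sigma' w ε k : ℝ) : ℂ) * (v + g)) :
    3/4 * (wSq k / 2 * ‖u‖ ^ 2) + 1/2 * (wdotSq w k * Gfun (wnSq w) (Leps ε (wSq k / 2))) * ‖u‖ ^ 2 ≤
      sigma' w ε k * ‖v‖ ^ 2 + 4 * ((wSq k / 2)⁻¹ * ‖g‖ ^ 2) := by
  have h0 := wSq_nonneg k
  have hw0 : 0 ≤ wdotSq w k := Finset.sum_nonneg fun _ _ => sq_nonneg _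
  have hY : 0 ≤ wdotSq w k * Gfun (wnSq w) (Leps ε (wSq k / 2)) := by
    apply mul_nonneg hw0
    apply Gfun_nonneg
    · unfold wnSq; positivity
    · exact Leps_nonneg _ _ (by positivity)
  have hY0 : wSq k = 0 → wdotSq w k * Gfun (wnSq w) (Leps ε (wSq k / 2)) = 0 := by
    intro h
    have := wdotSq_le w k
    rw [h, mul_zero] at this
    rw [le_antisymm this hw0, zero_mul]
  have hs := sigma_nonneg w ε k
  have hsd : sigma' w ε k = 2 / (wSq k + wdotSq w k * Gfun (wnSq w) (Leps ε (wSq k / 2))) := rfl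
  generalize wdotSq w k * Gfun (wnSq w) (Leps ε (wSq k / 2)) = Y at *
  generalize sigma' w ε k = s at *
  generalize wSq k = x at *
  rcases h0.eq_or_lt with hx | hx
  · have hY1 := hY0 hx.symm
    rw [← hx, hY1] at hsd
    rw [← hx, hY1]
    simp at hsd
    subst hsd
    simp
  · have hD : s * (x / 2 + Y / 2) = 1 := by rw [hsd]; field_simp
    have r1 : u.re = s * (v.re + g.re) := by rw [hu]; simp
    have r2 : u.im = s * (v.im + g.im) := by rw [hu]; simp
    have c1 := coord (x/2) Y s _ _ _ (by positivity) hs hD r1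
    have c2 := coord (x/2) Y s _ _ _ (by positivity) hs hD r2
    rw [norm_sq_re_im, norm_sq_re_im, norm_sq_re_im]
    linarith

lemma step {n : ℕ} (w : Fin 2 → ℝ) (ε : ℝ) (hε : 0 < ε)
    (hk : ∀ f : Chaos 2 (n+1), Symm f →
    ENNReal.ofReal ((n+2).factorial : ℝ) * ∑' k, ENNReal.ofReal (sigma' w ε k * ‖Aplus 2 w ε f k‖ ^ 2) ≤
    ENNReal.ofReal ((n+1).factorial : ℝ) * ∑' k : Fin (n+1) → ZLat 2,
      ENNReal.ofReal ((1/2 * (wdotSq w k * Gfun (wnSq w) (Leps ε (wSq k / 2))) + 1/4 * (wSq k / 2)) * ‖f k‖ ^ 2))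
    (f : Chaos 2 (n+1)) (hf : Symm f) (g u : Chaos 2 (n+2))
    (hu : ∀ k, u k = ((sigma' w ε k : ℝ) : ℂ) * (Aplus 2 w ε f k + g k)) :
    ENNReal.ofReal (3/4) * EA u + EB w ε u ≤ EB w ε f + ENNReal.ofReal (1/4) * EA f + 4 * EG g := by
  have hG : ∀ {m : ℕ} (k : Fin m → ZLat 2), 0 ≤ wdotSq w k * Gfun (wnSq w) (Leps ε (wSq k / 2)) := by
    intro m k
    have h0 := wSq_nonneg k
    apply mul_nonneg (Finset.sum_nonneg fun _ _ => sq_nonneg _)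
    apply Gfun_nonneg
    · unfold wnSq; positivity
    · exact Leps_nonneg _ _ (by positivity)
  have e1 : ENNReal.ofReal (3/4) * EA u + EB w ε u ≤
      ENNReal.ofReal ((n+2).factorial : ℝ) * ∑' k, ENNReal.ofReal (sigma' w ε k * ‖Aplus 2 w ε f k‖ ^ 2) + 4 * EG g := by
    unfold EA EB EG
    rw [mul_left_comm, ← mul_add, ← ENNReal.tsum_mul_left (a := ENNReal.ofReal (3/4)), ← ENNReal.tsum_add,
      mul_left_comm 4, ← mul_add, ← ENNReal.tsum_mul_left (a := 4), ← ENNReal.tsum_add]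
    refine mul_le_mul_right (ENNReal.tsum_le_tsum fun k => ?_) _
    have h0 := wSq_nonneg k
    have hs := sigma_nonneg w ε k
    have hg := hG k
    rw [← ENNReal.ofReal_mul (by norm_num), ← ENNReal.ofReal_add (by positivity) (by positivity),
      show (4 : ENNReal) = ENNReal.ofReal 4 by simp, ← ENNReal.ofReal_mul (by norm_num), ← ENNReal.ofReal_add (by positivity) (by positivity)]
    exact ENNReal.ofReal_le_ofReal (point_u w ε k (u k) _ _ (hu k))
  refine le_trans e1 ?_
  gcongr
  refine le_trans (hk f hf) (le_of_eq ?_)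
  unfold EA EB
  rw [mul_left_comm, ← mul_add, ← ENNReal.tsum_mul_left (a := ENNReal.ofReal (1/4)), ← ENNReal.tsum_add]
  congr 1
  refine tsum_congr fun k => ?_
  have h0 := wSq_nonneg k
  have hg := hG k
  rw [← ENNReal.ofReal_mul (by norm_num), ← ENNReal.ofReal_add (by positivity) (by positivity)]
  congr 1
  ring

lemma EA_zero {n : ℕ} : EA (0 : Chaos 2 n) = 0 := by simp [EA]
lemma EB_zero {n : ℕ} (w : Fin 2 → ℝ) (ε : ℝ) : EB w ε (0 : Chaos 2 n) = 0 := by simp [EB]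

lemma iter (a b c : ℕ → ENNReal) (i n : ℕ) (h0 : ∀ t, t + 1 < i → a t = 0 ∧ b t = 0) (hi : 2 ≤ i)
    (h : ∀ t, i ≤ t + 2 → t + 2 ≤ n → ENNReal.ofReal (3/4) * a (t+1) + b (t+1) ≤ b t + ENNReal.ofReal (1/4) * a t + 4 * c (t+1)) :
    ∀ T, T + 1 ≤ n → ENNReal.ofReal (1/2) * ∑ t ∈ Finset.range (T+1), a t + ENNReal.ofReal (1/4) * a T + b T ≤
      4 * ∑ t ∈ Finset.range (T+1), c t := by
  intro T
  induction T with
  | zero =>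
    intro _
    obtain ⟨e1, e2⟩ := h0 0 (by omega)
    simp [e1, e2]
  | succ T ih =>
    intro hT
    have ih := ih (by omega)
    rw [Finset.sum_range_succ, Finset.sum_range_succ (n := T+1), mul_add, mul_add]
    have e34 : ENNReal.ofReal (3/4) = ENNReal.ofReal (1/2) + ENNReal.ofReal (1/4) := by
      rw [← ENNReal.ofReal_add (by norm_num) (by norm_num)]; norm_num
    by_cases hiT : i ≤ T + 2
    · have hs := h T hiT hT
      rw [e34, add_mul] at hs
      calc _ = ENNReal.ofReal (1/2) * ∑ t ∈ Finset.range (T+1), a t +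
            (ENNReal.ofReal (1/2) * a (T+1) + ENNReal.ofReal (1/4) * a (T+1) + b (T+1)) := by ring
        _ ≤ ENNReal.ofReal (1/2) * ∑ t ∈ Finset.range (T+1), a t + (b T + ENNReal.ofReal (1/4) * a T + 4 * c (T+1)) := by gcongr
        _ = (ENNReal.ofReal (1/2) * ∑ t ∈ Finset.range (T+1), a t + ENNReal.ofReal (1/4) * a T + b T) + 4 * c (T+1) := by ring
        _ ≤ _ := by gcongr
    · obtain ⟨e1, e2⟩ := h0 (T+1) (by omega)
      obtain ⟨e3, e4⟩ := h0 T (by omega)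
      rw [e3, e4] at ih
      rw [e1, e2]
      simp only [mul_zero, add_zero] at ih ⊢
      exact le_trans ih le_self_add

lemma sobSq_half {n : ℕ} (f : Chaos 2 n) : sobSq (1/2 : ℝ) f = (EA f).toReal := by
  unfold sobSq EA sobTerm
  rw [ENNReal.toReal_mul, ENNReal.toReal_ofReal (by positivity), ENNReal.tsum_toReal_eq (fun _ => ENNReal.ofReal_ne_top)]
  congr 1
  refine tsum_congr fun k => ?_
  have := wSq_nonneg k
  rw [ENNReal.toReal_ofReal (by positivity)]
  norm_num

lemma neg_half_term {n : ℕ} (f : Chaos 2 n) (k : Fin n → ZLat 2) :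
    sobTerm (-(1/2) : ℝ) f k = (wSq k / 2)⁻¹ * ‖f k‖ ^ 2 := by
  unfold sobTerm
  have := wSq_nonneg k
  rw [show (2 * -(1/2) : ℝ) = -1 by norm_num, Real.rpow_neg_one]

lemma sobSq_neg_half {n : ℕ} (f : Chaos 2 n) : sobSq (-(1/2) : ℝ) f = (EG f).toReal := by
  unfold sobSq EG
  rw [ENNReal.toReal_mul, ENNReal.toReal_ofReal (by positivity), ENNReal.tsum_toReal_eq (fun _ => ENNReal.ofReal_ne_top)]
  congr 1
  refine tsum_congr fun k => ?_
  have := wSq_nonneg k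
  rw [ENNReal.toReal_ofReal (by positivity), neg_half_term]

lemma EG_ne_top {n : ℕ} (f : Chaos 2 n) (h : Summable (sobTerm (-(1/2) : ℝ) f)) : EG f ≠ ⊤ := by
  unfold EG
  apply ENNReal.mul_ne_top ENNReal.ofReal_ne_top
  have : ∀ k, ENNReal.ofReal ((wSq k / 2)⁻¹ * ‖f k‖ ^ 2) = ENNReal.ofReal (sobTerm (-(1/2) : ℝ) f k) := by
    intro k; rw [neg_half_term]
  simp only [this]
  exact h.tsum_ofReal_ne_top

lemma min_eps (p : ℕ → ℝ → Prop) (h : ∀ t, ∃ e > 0, ∀ ε, 0 < ε → ε < e → p t ε) (n : ℕ) :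
    ∃ e > 0, ∀ ε, 0 < ε → ε < e → ∀ t < n, p t ε := by
  induction n with
  | zero => exact ⟨1, one_pos, fun _ _ _ t ht => absurd ht (Nat.not_lt_zero t)⟩
  | succ n ih =>
    obtain ⟨e1, h1, H1⟩ := ih
    obtain ⟨e2, h2, H2⟩ := h n
    refine ⟨min e1 e2, lt_min h1 h2, fun ε hε hlt t ht => ?_⟩
    rcases Nat.lt_succ_iff_lt_or_eq.1 ht with h | h
    · exact H1 ε hε (lt_of_lt_of_le hlt (min_le_left _ _)) t h
    · rw [h]; exact H2 ε hε (lt_of_lt_of_le hlt (min_le_right _ _))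

/-- a priori estimate for the two-dimensional ansatz.
Here `u t : ΓL²_{t+1}` plays the role of `ũ_{t+1}`: the recursion
`ũ_j = S^ε A⁺_ε ũ_{j−1} + S^ε g_j` holds for `i ≤ j ≤ n`, with `ũ_{j} = 0` for `j < i`
and `g_j = 0` for `j ∉ {i,…,m}`.  There are `C > 0` independent of `n` and `ε`, and,
for each `n`, an `ε₂(n) > 0`, such that for all `ε < ε₂(n)`,
`Σ_{j=i}^n ‖(−L₀)^{1/2} ũ_j‖² ≤ C Σ_{j=i}^m ‖(−L₀)^{−1/2} g_j‖²`. -/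
theorem stmt9 (w : Fin 2 → ℝ) (hw : w ≠ 0)
    (i m : ℕ) (hi : i = 2 ∨ i = 3) (him : i ≤ m) :
    ∃ C : ℝ, 0 < C ∧
      ∀ n : ℕ, m ≤ n →
      ∃ ε₂ : ℝ, 0 < ε₂ ∧
        ∀ ε : ℝ, 0 < ε → ε < ε₂ → ε < 1 →
        ∀ g u : (t : ℕ) → Chaos 2 (t+1),
          (∀ t, Symm (g t)) → (∀ t, SuppOk (g t)) →
          (∀ t, Summable (sobTerm (-(1/2) : ℝ) (g t))) →
          (∀ t, t+1 < i ∨ m < t+1 → g t = 0) →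
          (∀ t, t+1 < i → u t = 0) →
          (∀ t, i ≤ t+2 → t+2 ≤ n → ∀ k : Fin (t+2) → ZLat 2,
            u (t+1) k = ((sigma' w ε k : ℝ) : ℂ) * (Aplus 2 w ε (u t) k + g (t+1) k)) →
          ∑ j ∈ Finset.Icc i n, sobSq (1/2 : ℝ) (u (j-1)) ≤
            C * ∑ j ∈ Finset.Icc i m, sobSq (-(1/2) : ℝ) (g (j-1)) := by
  refine ⟨8, by norm_num, fun n hmn => ?_⟩
  obtain ⟨ε₂, hε₂, H⟩ := min_eps _ (fun t => key w hw t) n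
  refine ⟨ε₂, hε₂, fun ε hε hlt _ g u hgs _ hgsum hg0 hu0 hu => ?_⟩
  have hi2 : 2 ≤ i := by omega
  have hsymm : ∀ t, t + 1 ≤ n → Symm (u t) := by
    intro t
    induction t with
    | zero =>
      intro _
      rw [hu0 0 (by omega)]
      intro σ k; rfl
    | succ t ih =>
      intro ht
      by_cases h : i ≤ t + 2
      · intro σ k
        rw [hu t h ht, hu t h ht, sigma_comp, Aplus_symm w ε (u t) (ih (by omega)) σ k, hgs (t+1) σ k]
      · rw [hu0 (t+1) (by omega)]
        intro σ k; rfl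
  have main := iter (fun t => EA (u t)) (fun t => EB w ε (u t)) (fun t => EG (g t)) i n
    (fun t ht => by simp only [hu0 t ht, EA_zero, EB_zero, and_self]) hi2
    (fun t h1 h2 => step w ε hε (H ε hε hlt t (by omega)) (u t) (hsymm t (by omega)) (g (t+1)) (u (t+1)) (hu t h1 h2))
    (n-1) (by omega)
  have hn : n - 1 + 1 = n := by omega
  have main := le_trans (le_trans le_self_add le_self_add) main
  rw [hn] at main
  have hfinR : ∑ t ∈ Finset.range n, EG (g t) ≠ ⊤ := ENNReal.sum_ne_top.2 fun t _ => EG_ne_top _ (hgsum t)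
  have m2 : ∑ t ∈ Finset.range n, EA (u t) ≤ 8 * ∑ t ∈ Finset.range n, EG (g t) := by
    have m3 : ENNReal.ofReal (1/2) * ∑ t ∈ Finset.range n, EA (u t) ≤ 4 * ∑ t ∈ Finset.range n, EG (g t) :=
      main
    have m4 := mul_le_mul_right m3 2
    rw [← mul_assoc, ← mul_assoc, show (2 : ENNReal) = ENNReal.ofReal 2 by simp, ← ENNReal.ofReal_mul (by norm_num)] at m4
    norm_num at m4
    convert m4 using 2
  have hfinL : ∑ t ∈ Finset.range n, EA (u t) ≠ ⊤ :=
    ne_top_of_le_ne_top (ENNReal.mul_ne_top (by simp) hfinR) m2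
  have m5 := ENNReal.toReal_mono (ENNReal.mul_ne_top (by simp) hfinR) m2
  rw [ENNReal.toReal_mul, ENNReal.toReal_sum (fun t ht => (ENNReal.sum_ne_top.1 hfinL) t ht),
    ENNReal.toReal_sum (fun t ht => (ENNReal.sum_ne_top.1 hfinR) t ht)] at m5
  simp only [← sobSq_half, ← sobSq_neg_half] at m5
  have reidx : ∀ (φ : ℕ → ℝ) (N : ℕ), N ≤ n → (∀ t, t + 1 < i ∨ N < t + 1 → φ t = 0) →
      ∑ j ∈ Finset.Icc i N, φ (j-1) = ∑ t ∈ Finset.range n, φ t := by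
    intro φ N hN h
    have e1 : ∑ j ∈ Finset.Icc i N, φ (j-1) = ∑ t ∈ Finset.Ico (i-1) N, φ t := by
      refine Finset.sum_bij' (fun j _ => j - 1) (fun t _ => t + 1) ?_ ?_ ?_ ?_ ?_
      · intro a ha; simp only [Finset.mem_Icc, Finset.mem_Ico] at *; omega
      · intro a ha; simp only [Finset.mem_Icc, Finset.mem_Ico] at *; omega
      · intro a ha; simp only [Finset.mem_Icc] at *; omega
      · intro a ha; simp
      · intro a ha; rfl
    rw [e1]
    apply Finset.sum_subset
    · intro a ha; simp only [Finset.mem_range, Finset.mem_Ico] at *; omega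
    · intro a ha ha'
      apply h
      simp only [Finset.mem_range, Finset.mem_Ico] at *; omega
  have r1 : ∑ j ∈ Finset.Icc i n, sobSq (1/2 : ℝ) (u (j-1)) ≤ ∑ t ∈ Finset.range n, sobSq (1/2 : ℝ) (u t) := by
    have e1 : ∑ j ∈ Finset.Icc i n, sobSq (1/2 : ℝ) (u (j-1)) = ∑ t ∈ Finset.Ico (i-1) n, sobSq (1/2 : ℝ) (u t) := by
      refine Finset.sum_bij' (fun j _ => j - 1) (fun t _ => t + 1) ?_ ?_ ?_ ?_ ?_
      · intro a ha; simp only [Finset.mem_Icc, Finset.mem_Ico] at *; omega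
      · intro a ha; simp only [Finset.mem_Icc, Finset.mem_Ico] at *; omega
      · intro a ha; simp only [Finset.mem_Icc] at *; omega
      · intro a ha; simp
      · intro a ha; rfl
    rw [e1]
    apply Finset.sum_le_sum_of_subset_of_nonneg
    · intro a ha; simp only [Finset.mem_range, Finset.mem_Ico] at *; omega
    · intro a _ _; rw [sobSq_half]; exact ENNReal.toReal_nonneg
  have r2 := reidx (fun t => sobSq (-(1/2) : ℝ) (g t)) m hmn (by
    intro t ht
    simp only [hg0 t ht, sobSq_neg_half]
    simp [EG])
  rw [r2]
  refine le_trans r1 (le_trans m5 (le_of_eq ?_))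
  simp

end SBE
end
end

section
/- (Uniform bounds for the labelled, δ-weighted creation and annihilation operators.) Let d ≥ 3 and δ ∈ [0, (d−2)/2). Define, for 1 ≤ i < i' ≤ n+1, the operator A^{ε,δ}_+[(i,i')] : L²_n → L²_{n+1} by (A^{ε,δ}_+[(i,i')]f)(k_{1:n+1}) := ε^{d/2} |2 ε^{-1} (w·(k_i+k_{i'}))/(2π)^{d/2}|^{1+δ} J^ε_{k_i,k_{i'}} f(k_i+k_{i'}, k_{{1:n+1}∖{i,i'}}), and for 1 ≤ q ≤ n−1 the operator A^{ε,δ}_−[q] : L²_n → L²_{n−1} by (A^{ε,δ}_−[q]f)(k_{1:n−1}) := ε^{d/2} |2 ε^{-1} (w·k_q)/(2π)^{d/2}|^{1+δ} Σ_{ℓ,m ∈ ℤ^d₀, ℓ+m=k_q} J^ε_{ℓ,m} f(ℓ, m, k_{{1:n−1}∖{q}}); set T^{ε,δ,+}[(i,i')] := (−L₀)^{−(1+δ)/2} A^{ε,δ}_+[(i,i')] (−L₀)^{−(1+δ)/2} and T^{ε,δ,−}[q] := (−L₀)^{−(1+δ)/2} A^{ε,δ}_−[q] (−L₀)^{−(1+δ)/2}.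 Then there exists C = C(d, δ) > 0, independent of ε, n and the indices i, i', q, such that for every f ∈ L²_n: ‖T^{ε,δ,+}[(i,i')] f‖_{L²_{n+1}} ≤ C ‖f‖_{L²_n} and ‖T^{ε,δ,−}[q] f‖_{L²_{n−1}} ≤ C ‖f‖_{L²_n}. -/
open scoped BigOperators
open scoped Classical

noncomputable section

namespace SBE

/-- `L²` norm squared (no factorial): `Σ_k |f(k)|²`. -/
def l2Sq {d n : ℕ} (f : Chaos d n) : ℝ := ∑' k, ‖f k‖^2

/-- Diagonal operator `(−L₀)^s`, multiplying the kernel at `k` by `(|k_{1:n}|²/2)^s`. -/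
def negPow {d n : ℕ} (s : ℝ) (f : Chaos d n) : Chaos d n :=
  fun k => (((wSq k / 2) ^ s : ℝ) : ℂ) * f k

/-- The labelled creation operator `A⁺_ε[(i,j)] : L²_{n+1} → L²_{n+2}`. -/
def AplusL (d : ℕ) (w : Fin d → ℝ) (ε : ℝ) {n : ℕ} (i j : Fin (n+2)) (h : i < j)
    (f : Chaos d (n+1)) : Chaos d (n+2) :=
  fun k => -((2 * Complex.I * ((ε ^ ((d:ℝ)/2 - 1) : ℝ) : ℂ)) /
        (((2*Real.pi) ^ ((d:ℝ)/2) : ℝ) : ℂ)) *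
      ((dotw w (k i + k j) : ℝ) : ℂ) * ((Jind d ε (k i) (k j) : ℝ) : ℂ) *
      f (Fin.cons (k i + k j) (remove2 k i j h))

/-- The labelled annihilation operator `A⁻_ε[q] : L²_{n+2} → L²_{n+1}`. -/
def AminusL (d : ℕ) (w : Fin d → ℝ) (ε : ℝ) {n : ℕ} (q : Fin (n+1))
    (f : Chaos d (n+2)) : Chaos d (n+1) :=
  fun k => ((2 * Complex.I * ((ε ^ ((d:ℝ)/2 - 1) : ℝ) : ℂ)) /
        (((2*Real.pi) ^ ((d:ℝ)/2) : ℝ) : ℂ)) *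
      ((dotw w (k q) : ℝ) : ℂ) *
    ∑' l : ZLat d, ((Jind d ε l (k q - l) : ℝ) : ℂ) *
      f (Fin.cons l (Fin.cons (k q - l) (fun a => k (q.succAbove a))))

/-- `T^{ε,+}[(i,j)] = (−L₀)^{−1/2} A⁺_ε[(i,j)] (−L₀)^{−1/2}`. -/
def TplusL (d : ℕ) (w : Fin d → ℝ) (ε : ℝ) {n : ℕ} (i j : Fin (n+2)) (h : i < j)
    (f : Chaos d (n+1)) : Chaos d (n+2) :=
  negPow (-(1/2)) (AplusL d w ε i j h (negPow (-(1/2)) f))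

/-- `T^{ε,−}[q] = (−L₀)^{−1/2} A⁻_ε[q] (−L₀)^{−1/2}`. -/
def TminusL (d : ℕ) (w : Fin d → ℝ) (ε : ℝ) {n : ℕ} (q : Fin (n+1))
    (f : Chaos d (n+2)) : Chaos d (n+1) :=
  negPow (-(1/2)) (AminusL d w ε q (negPow (-(1/2)) f))

/-- The `δ`-weighted labelled creation operator `A^{ε,δ}_+[(i,j)]`. -/
def AplusD (d : ℕ) (w : Fin d → ℝ) (ε δ : ℝ) {n : ℕ} (i j : Fin (n+2)) (h : i < j)
    (f : Chaos d (n+1)) : Chaos d (n+2) :=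
  fun k => ((ε ^ ((d:ℝ)/2) *
      |2 * ε⁻¹ * dotw w (k i + k j) / (2*Real.pi) ^ ((d:ℝ)/2)| ^ (1+δ) *
      Jind d ε (k i) (k j) : ℝ) : ℂ) *
    f (Fin.cons (k i + k j) (remove2 k i j h))

/-- The `δ`-weighted labelled annihilation operator `A^{ε,δ}_−[q]`. -/
def AminusD (d : ℕ) (w : Fin d → ℝ) (ε δ : ℝ) {n : ℕ} (q : Fin (n+1))
    (f : Chaos d (n+2)) : Chaos d (n+1) :=
  fun k => ((ε ^ ((d:ℝ)/2) *
      |2 * ε⁻¹ * dotw w (k q) / (2*Real.pi) ^ ((d:ℝ)/2)| ^ (1+δ) : ℝ) : ℂ) *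
    ∑' l : ZLat d, ((Jind d ε l (k q - l) : ℝ) : ℂ) *
      f (Fin.cons l (Fin.cons (k q - l) (fun a => k (q.succAbove a))))

/-- `T^{ε,δ,+}[(i,j)] = (−L₀)^{−(1+δ)/2} A^{ε,δ}_+[(i,j)] (−L₀)^{−(1+δ)/2}`. -/
def TplusD (d : ℕ) (w : Fin d → ℝ) (ε δ : ℝ) {n : ℕ} (i j : Fin (n+2)) (h : i < j)
    (f : Chaos d (n+1)) : Chaos d (n+2) :=
  negPow (-(1+δ)/2) (AplusD d w ε δ i j h (negPow (-(1+δ)/2) f))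

/-- `T^{ε,δ,−}[q] = (−L₀)^{−(1+δ)/2} A^{ε,δ}_−[q] (−L₀)^{−(1+δ)/2}`. -/
def TminusD (d : ℕ) (w : Fin d → ℝ) (ε δ : ℝ) {n : ℕ} (q : Fin (n+1))
    (f : Chaos d (n+2)) : Chaos d (n+1) :=
  negPow (-(1+δ)/2) (AminusD d w ε δ q (negPow (-(1+δ)/2) f))

lemma one_dim (b : ℝ) (hb0 : 0 ≤ b) (hb : b < 1) (M : ℕ) :
    ∑ m ∈ Finset.Icc (-(M:ℤ)) M, (max |(m:ℝ)| 1) ^ (-b) ≤ 1 + 2 / (1-b) * (M:ℝ) ^ (1-b) := by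
  have h1b : 0 < 1 - b := by linarith
  induction M with
  | zero => simp [Real.zero_rpow h1b.ne']
  | succ M ih =>
    have hI : Finset.Icc (-((M+1:ℕ):ℤ)) ((M+1:ℕ):ℤ) =
        insert (-((M:ℤ)+1)) (insert ((M:ℤ)+1) (Finset.Icc (-(M:ℤ)) M)) := by
      ext x; simp only [Finset.mem_Icc, Finset.mem_insert]; push_cast; omega
    rw [hI, Finset.sum_insert, Finset.sum_insert]
    · have hM : (0:ℝ) < (M:ℝ) + 1 := by positivity
      have e1 : max |(((M:ℤ)+1 : ℤ):ℝ)| 1 = (M:ℝ)+1 := by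
        push_cast; rw [abs_of_pos hM]; simp
      have e2 : max |((-((M:ℤ)+1) : ℤ):ℝ)| 1 = (M:ℝ)+1 := by
        push_cast; rw [abs_neg, abs_of_pos hM]; simp
      rw [e1, e2]
      have key : (1 - b) * ((M:ℝ)+1) ^ (-b) ≤ ((M:ℝ)+1)^(1-b) - (M:ℝ)^(1-b) := by
        have hs : (-1:ℝ) ≤ -(1/((M:ℝ)+1)) := by
          have : 1/((M:ℝ)+1) ≤ 1 := by rw [div_le_one hM]; linarith [(Nat.cast_nonneg M : (0:ℝ) ≤ M)]
          linarith
        have := rpow_one_add_le_one_add_mul_self hs h1b.le (by linarith)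
        have e3 : (1 + -(1/((M:ℝ)+1))) = (M:ℝ)/((M:ℝ)+1) := by field_simp; ring
        rw [e3, Real.div_rpow (by positivity) hM.le, div_le_iff₀ (by positivity)] at this
        have e4 : ((M:ℝ)+1)^(1-b) = ((M:ℝ)+1) * ((M:ℝ)+1)^(-b) := by
          rw [sub_eq_add_neg, Real.rpow_add hM, Real.rpow_one]
        rw [e4] at this ⊢
        have e5 : (1 + (1 - b) * -(1 / ((M:ℝ) + 1))) * (((M:ℝ) + 1) * ((M:ℝ) + 1) ^ (-b)) 
          = ((M:ℝ) + 1) * ((M:ℝ) + 1) ^ (-b) - (1-b) * ((M:ℝ) + 1) ^ (-b) := by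
          field_simp; ring
        linarith
      push_cast
      have k2 : 2 * ((M:ℝ)+1) ^ (-b) ≤ 2/(1-b) * ((M:ℝ)+1)^(1-b) - 2/(1-b) * (M:ℝ)^(1-b) := by
        have : 2 * ((M:ℝ)+1) ^ (-b) = 2/(1-b) * ((1 - b) * ((M:ℝ)+1) ^ (-b)) := by field_simp
        rw [this, ← mul_sub]
        exact mul_le_mul_of_nonneg_left key (by positivity)
      linarith
    · simp
    · simp only [Finset.mem_Icc, Finset.mem_insert]; omega

lemma max_le_nsq {d : ℕ} (l : ZLat d) (hl : l ≠ 0) (i : Fin d) :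
    (max |(l i:ℝ)| 1) ^ 2 ≤ nsq l := by
  have hi : ∀ i, ((l i:ℝ))^2 ≤ nsq l := fun i =>
    Finset.single_le_sum (f := fun i => ((l i:ℝ))^2) (fun _ _ => sq_nonneg _) (Finset.mem_univ i)
  rcases le_total (1:ℝ) |(l i:ℝ)| with h | h
  · rw [max_eq_left h, sq_abs]; exact hi i
  · rw [max_eq_right h]
    obtain ⟨j, hj⟩ := Function.ne_iff.mp hl
    refine le_trans ?_ (hi j)
    have : (1:ℤ) ≤ (l j)^2 := by
      have hj' : l j ≠ 0 := hj
      have : 0 < (l j)^2 := by positivity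
      omega
    have : (1:ℝ) ≤ (l j:ℝ)^2 := by exact_mod_cast this
    simpa using this

lemma nsq_pos {d : ℕ} (l : ZLat d) (hl : l ≠ 0) : 0 < nsq l := by
  obtain ⟨j, hj⟩ := Function.ne_iff.mp hl
  refine lt_of_lt_of_le ?_ (max_le_nsq l hl j)
  positivity

def cube (d : ℕ) (ε : ℝ) : Finset (ZLat d) :=
  Fintype.piFinset fun _ => Finset.Icc (-((⌊1/ε⌋₊ : ℕ):ℤ)) (⌊1/ε⌋₊ : ℕ)

def GG (d : ℕ) (a ε : ℝ) (l : ZLat d) : ℝ :=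
  if l ∈ cube d ε ∧ l ≠ 0 then ε ^ ((d:ℝ) - 2*a) * (nsq l) ^ (-a) else 0

lemma GG_nonneg (d : ℕ) (a ε : ℝ) (hε : 0 < ε) (l : ZLat d) : 0 ≤ GG d a ε l := by
  unfold GG; split_ifs
  · have := nsq_nonneg l; positivity
  · exact le_rfl

lemma GG_zero (d : ℕ) (a ε : ℝ) (l : ZLat d) (h : l ∉ cube d ε) : GG d a ε l = 0 := by
  simp [GG, h]

lemma GG_sum (d : ℕ) (hd : 0 < d) (a : ℝ) (ha0 : 0 ≤ a) (ha : 2 * a < d) (ε : ℝ) (h0 : 0 < ε) (h1 : ε < 1) :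
    ∑ l ∈ cube d ε, GG d a ε l ≤ (1 + 2/(1-2*a/d)) ^ d := by
  have hd' : (0:ℝ) < d := by exact_mod_cast hd
  set b := 2*a/(d:ℝ) with hbdef
  have hb0 : 0 ≤ b := by positivity
  have hb : b < 1 := by rw [hbdef, div_lt_one hd']; exact ha
  have h1b : 0 < 1 - b := by linarith
  have hbd : b * d = 2 * a := by rw [hbdef]; field_simp
  have step1 : ∀ l : ZLat d, GG d a ε l ≤ ε ^ ((d:ℝ) - 2*a) * ∏ i, (max |(l i:ℝ)| 1) ^ (-b) := by
    intro l
    unfold GG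
    split_ifs with h
    · refine mul_le_mul_of_nonneg_left ?_ (by positivity)
      have hp := nsq_pos l h.2
      have : nsq l ^ (-a) = ∏ i : Fin d, nsq l ^ (-b/2) := by
        rw [Finset.prod_const, Finset.card_univ, Fintype.card_fin, ← Real.rpow_natCast,
          ← Real.rpow_mul hp.le]
        congr 1; linarith
      rw [this]
      refine Finset.prod_le_prod (fun _ _ => by positivity) fun i _ => ?_
      have hm : (0:ℝ) < max |(l i:ℝ)| 1 := by positivity
      have : (max |(l i:ℝ)| 1) ^ (-b) = ((max |(l i:ℝ)| 1)^2) ^ (-b/2) := by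
        rw [← Real.rpow_natCast, ← Real.rpow_mul hm.le]; congr 1; push_cast; ring
      rw [this]
      exact Real.rpow_le_rpow_of_nonpos (by positivity) (max_le_nsq l h.2 i) (by linarith)
    · positivity
  refine (Finset.sum_le_sum fun l _ => step1 l).trans ?_
  rw [← Finset.mul_sum]
  unfold cube
  rw [← Finset.prod_univ_sum (fun _ : Fin d => Finset.Icc (-((⌊1/ε⌋₊ : ℕ):ℤ)) (⌊1/ε⌋₊ : ℕ))
    (fun _ m => (max |(m:ℝ)| 1) ^ (-b)), Finset.prod_const, Finset.card_univ, Fintype.card_fin]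
  have e : ε ^ ((d:ℝ) - 2*a) = (ε ^ (1-b)) ^ d := by
    rw [← Real.rpow_natCast, ← Real.rpow_mul h0.le]; congr 1; linarith
  rw [e, ← mul_pow]
  refine pow_le_pow_left₀ (mul_nonneg (by positivity) (Finset.sum_nonneg fun _ _ => by positivity)) ?_ d
  have h3 := one_dim b hb0 hb ⌊1/ε⌋₊
  have h4 : ((⌊1/ε⌋₊:ℕ):ℝ)^(1-b) ≤ (1/ε)^(1-b) :=
    Real.rpow_le_rpow (by positivity) (Nat.floor_le (by positivity)) h1b.le
  have h5 : ε^(1-b) ≤ 1 := Real.rpow_le_one h0.le h1.le h1b.le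
  have h6 : ε^(1-b) * (1/ε)^(1-b) = 1 := by
    rw [← Real.mul_rpow h0.le (by positivity)]; simp [h0.ne']
  have h7 : 0 < ε^(1-b) := by positivity
  have h8 : 0 < 2/(1-b) := by positivity
  calc _ ≤ ε^(1-b) * (1 + 2/(1-b) * (1/ε)^(1-b)) := by
        refine mul_le_mul_of_nonneg_left (h3.trans ?_) h7.le
        gcongr
    _ = ε^(1-b) + 2/(1-b) * (ε^(1-b) * (1/ε)^(1-b)) := by ring
    _ ≤ _ := by rw [h6]; linarith

lemma Jind_cases_s12 (d : ℕ) (hd : 3 ≤ d) (ε : ℝ) (h0 : 0 < ε) (l m : ZLat d) :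
    Jind d ε l m = 0 ∨ (Jind d ε l m = 1 ∧ l ∈ cube d ε ∧ l ≠ 0 ∧ l + m ≠ 0) := by
  unfold Jind
  split_ifs with h
  · right
    have hd2 : d ≠ 2 := by omega
    simp only [cutNorm, hd2, if_false] at h
    obtain ⟨p1, p2, -, -, p3, -⟩ := h
    have z : sN (0 : ZLat d) = 0 := by
      simp [sN]
    refine ⟨rfl, ?_, ?_, ?_⟩
    · unfold cube
      rw [Fintype.mem_piFinset]
      intro i
      have h1 : (l i).natAbs ≤ (Finset.univ.sup fun i => (l i).natAbs) :=
        Finset.le_sup (f := fun i => (l i).natAbs) (Finset.mem_univ i)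
      have h2 : (Finset.univ.sup fun i => (l i).natAbs) ≤ ⌊1/ε⌋₊ := by
        apply Nat.le_floor
        rw [le_div_iff₀ h0, mul_comm]
        exact p2
      rw [Finset.mem_Icc]; omega
    · rintro rfl; rw [z] at p1; simp at p1
    · intro h; rw [h, z] at p3; simp at p3
  · left; rfl

lemma dotw_sq {d : ℕ} (w : Fin d → ℝ) (p : ZLat d) : (dotw w p)^2 ≤ (∑ i, w i ^ 2) * nsq p :=
  Finset.sum_mul_sq_le_sq_mul_sq _ _ _

def KK (d : ℕ) (w : Fin d → ℝ) (a : ℝ) : ℝ :=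
  (16 * (∑ i, w i ^ 2) / ((2*Real.pi) ^ ((d:ℝ)/2))^2) ^ a

lemma mult_bound (d : ℕ) (w : Fin d → ℝ) (a : ℝ) (ha : 0 ≤ a) (ε : ℝ) (h0 : 0 < ε)
    (l p : ZLat d) (hl : l ≠ 0) (hp : p ≠ 0) (X Y : ℝ) (hX : nsq l ≤ X) (hY : nsq p ≤ Y) :
    ((X/2) ^ (-a/2) * (ε ^ ((d:ℝ)/2) *
      |2 * ε⁻¹ * dotw w p / (2*Real.pi) ^ ((d:ℝ)/2)| ^ a) * (Y/2) ^ (-a/2))^2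
      ≤ KK d w a * (ε ^ ((d:ℝ) - 2*a) * nsq l ^ (-a)) := by
  have hl' := nsq_pos l hl
  have hp' := nsq_pos p hp
  have sq_r : ∀ x : ℝ, 0 ≤ x → ∀ s : ℝ, (x ^ s)^2 = x ^ (s*2) := by
    intro x hx s; rw [← Real.rpow_natCast, ← Real.rpow_mul hx]; norm_num
  have hX0 : 0 < X := by linarith
  have hY0 : 0 < Y := by linarith
  set c := (2*Real.pi) ^ ((d:ℝ)/2) with hc
  have hc0 : 0 < c := by positivity
  set W := ∑ i, w i ^ 2 with hW
  have hW0 : 0 ≤ W := Finset.sum_nonneg fun _ _ => sq_nonneg _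
  have hdot := dotw_sq w p
  rw [mul_pow, mul_pow, mul_pow, sq_r _ (by positivity), sq_r _ (by positivity),
    sq_r _ (by positivity), sq_r _ (by positivity)]
  have e1 : |2 * ε⁻¹ * dotw w p / c| ^ (a*2) ≤ (4 * (ε⁻¹)^2 * (W * nsq p) / c^2) ^ a := by
    rw [mul_comm a 2, Real.rpow_mul (abs_nonneg _)]
    refine Real.rpow_le_rpow (by positivity) ?_ ha
    have : |2 * ε⁻¹ * dotw w p / c| ^ (2:ℝ) = 4 * (ε⁻¹)^2 * (dotw w p)^2 / c^2 := by
      rw [Real.rpow_two, sq_abs]; ring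
    rw [this]
    gcongr
  have e2 : (Y/2) ^ (-a/2*2) ≤ (nsq p / 2) ^ (-a) := by
    rw [show -a/2*2 = -a by ring]
    exact Real.rpow_le_rpow_of_nonpos (by positivity) (by linarith) (by linarith)
  have e3 : (X/2) ^ (-a/2*2) ≤ (nsq l / 2) ^ (-a) := by
    rw [show -a/2*2 = -a by ring]
    exact Real.rpow_le_rpow_of_nonpos (by positivity) (by linarith) (by linarith)
  calc _ ≤ (nsq l / 2) ^ (-a) * (ε ^ ((d:ℝ)/2*2) * (4 * (ε⁻¹)^2 * (W * nsq p) / c^2) ^ a)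
          * (nsq p / 2) ^ (-a) := by gcongr
    _ = _ := by
      unfold KK
      rw [← hc, ← hW]
      have a1 : (4 * (ε⁻¹)^2 * (W * nsq p) / c^2) = (16 * W / c^2) * (ε^2)⁻¹ * (nsq p / 2) * 2⁻¹ := by
        field_simp; ring
      rw [a1, Real.mul_rpow (by positivity) (by positivity), Real.mul_rpow (by positivity) (by positivity),
        Real.mul_rpow (by positivity) (by positivity)]
      have a2 : (nsq l / 2)^(-a) = nsq l ^ (-a) * (2:ℝ)^a := by
        rw [Real.div_rpow hl'.le (by norm_num), Real.rpow_neg (by norm_num : (0:ℝ) ≤ 2), div_inv_eq_mul]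
      have a3 : ((ε^2)⁻¹)^a = ε^(-(2*a)) := by
        rw [← Real.rpow_natCast, ← Real.rpow_neg h0.le, ← Real.rpow_mul h0.le]; congr 1; push_cast; ring
      have a4 : ε ^ ((d:ℝ) - 2*a) = ε ^ ((d:ℝ)/2*2) * ε^(-(2*a)) := by
        rw [← Real.rpow_add h0]; congr 1; ring
      have a5 : (nsq p / 2)^a * (nsq p / 2)^(-a) = 1 := by
        rw [← Real.rpow_add (by positivity)]; simp
      have a6 : (2:ℝ)^a * (2⁻¹:ℝ)^a = 1 := by
        rw [← Real.mul_rpow (by norm_num) (by norm_num)]; norm_num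
      rw [a2, a3, a4]
      linear_combination (nsq l ^ (-a) * ε ^ ((d:ℝ)/2*2) * (16 * W / c^2)^a * ε^(-(2*a))) *
        ((nsq p / 2)^a * (nsq p / 2)^(-a) * a6 + a5)

lemma nsq_le_wSq {d n : ℕ} (k : Fin n → ZLat d) (a : Fin n) : nsq (k a) ≤ wSq k :=
  Finset.single_le_sum (f := fun a => nsq (k a)) (fun _ _ => nsq_nonneg _) (Finset.mem_univ a)

lemma plus_inj {d n : ℕ} (i j : Fin (n+2)) (h : i < j) :
    Function.Injective (fun k : Fin (n+2) → ZLat d =>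
      (k i, (Fin.cons (k i + k j) (remove2 k i j h) : Fin (n+1) → ZLat d))) := by
  intro k k' hk
  simp only [Prod.mk.injEq] at hk
  obtain ⟨h1, h2⟩ := hk
  rw [Fin.cons_inj] at h2
  obtain ⟨h2, h3⟩ := h2
  rw [h1] at h2
  have h2 := add_left_cancel h2
  funext x
  by_cases hxj : x = j
  · rw [hxj, h2]
  obtain ⟨y, rfl⟩ := Fin.exists_succAbove_eq hxj
  set i' : Fin (n+1) := Fin.castLT i
    (Nat.lt_of_lt_of_le (Fin.lt_def.mp h) (Nat.lt_succ_iff.mp j.isLt)) with hi'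
  by_cases hy : y = i'
  · have : j.succAbove y = i := by
      rw [hy, Fin.succAbove_of_castSucc_lt]
      · rfl
      · exact h
    rw [this, h1]
  · obtain ⟨z, rfl⟩ := Fin.exists_succAbove_eq hy
    exact congrFun h3 z

lemma minus_inj {d n : ℕ} (q : Fin (n+1)) :
    Function.Injective (fun x : (Fin (n+1) → ZLat d) × ZLat d =>
      (Fin.cons x.2 (Fin.cons (x.1 q - x.2) (fun a => x.1 (q.succAbove a))) : Fin (n+2) → ZLat d)) := by
  rintro ⟨k, l⟩ ⟨k', l'⟩ hk
  simp only [Fin.cons_inj] at hk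
  obtain ⟨h1, h2, h3⟩ := hk
  subst h1
  have h2 := sub_left_injective h2
  refine Prod.ext ?_ rfl
  funext x
  by_cases hx : x = q
  · rw [hx]; exact h2
  · obtain ⟨y, rfl⟩ := Fin.exists_succAbove_eq hx
    exact congrFun h3 y

lemma plus_case (d : ℕ) (hd : 3 ≤ d) (w : Fin d → ℝ) (δ : ℝ) (hδ0 : 0 ≤ δ) (S : ℝ)
    (ε : ℝ) (h0 : 0 < ε) (hS : ∑ l ∈ cube d ε, GG d (1+δ) ε l ≤ S)
    (n : ℕ) (i j : Fin (n+2)) (h : i < j) (f : Chaos d (n+1))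
    (hf : Summable (fun k => ‖f k‖^2)) :
    Summable (fun k => ‖TplusD d w ε δ i j h f k‖^2) ∧
      l2Sq (TplusD d w ε δ i j h f) ≤ KK d w (1+δ) * S * l2Sq f := by
  have ha : 0 ≤ 1 + δ := by linarith
  have hK : 0 ≤ KK d w (1+δ) := by
    unfold KK; have : 0 ≤ ∑ i, w i ^ 2 := Finset.sum_nonneg fun _ _ => sq_nonneg _
    positivity
  set F : ZLat d × (Fin (n+1) → ZLat d) → ℝ := fun x => (KK d w (1+δ) * GG d (1+δ) ε x.1) * ‖f x.2‖^2 with hF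
  have hGs : HasSum (fun l => KK d w (1+δ) * GG d (1+δ) ε l) (KK d w (1+δ) * ∑ l ∈ cube d ε, GG d (1+δ) ε l) :=
    (hasSum_sum_of_ne_finset_zero fun l hl => GG_zero _ _ _ _ hl).mul_left _
  have hG0 : ∀ l, 0 ≤ KK d w (1+δ) * GG d (1+δ) ε l := fun l => mul_nonneg hK (GG_nonneg _ _ _ h0 _)
  have hFs : Summable F := hGs.summable.mul_of_nonneg hf hG0 (fun _ => sq_nonneg _)
  have hF0 : ∀ x, 0 ≤ F x := fun x => mul_nonneg (hG0 _) (sq_nonneg _)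
  have hinj := plus_inj (d := d) i j h
  have hpt : ∀ k, ‖TplusD d w ε δ i j h f k‖^2 ≤
      F (k i, Fin.cons (k i + k j) (remove2 k i j h)) := by
    intro k
    unfold TplusD AplusD negPow
    beta_reduce
    rcases Jind_cases_s12 d hd ε h0 (k i) (k j) with hJ | ⟨hJ, hc, hl, hp⟩
    · rw [hJ]; simpa using hF0 _
    · rw [hJ]
      have hb := mult_bound d w (1+δ) ha ε h0 (k i) (k i + k j) hl hp (wSq k)
        (wSq (Fin.cons (k i + k j) (remove2 k i j h) : Fin (n+1) → ZLat d))
        (nsq_le_wSq k i)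
        (by simpa using nsq_le_wSq (Fin.cons (k i + k j) (remove2 k i j h) : Fin (n+1) → ZLat d) 0)
      rw [mul_one, ← mul_assoc, ← mul_assoc, ← Complex.ofReal_mul, ← Complex.ofReal_mul, norm_mul, mul_pow,
        Complex.norm_real, Real.norm_eq_abs, sq_abs]
      refine mul_le_mul_of_nonneg_right ?_ (sq_nonneg _)
      simp only [GG, hc, hl, ne_eq, not_false_eq_true, and_self, if_true]
      exact hb
  have hcs := hFs.comp_injective hinj
  have hs : Summable (fun k => ‖TplusD d w ε δ i j h f k‖^2) :=
    Summable.of_nonneg_of_le (fun _ => sq_nonneg _) hpt hcs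
  refine ⟨hs, ?_⟩
  have hl0 : 0 ≤ l2Sq f := tsum_nonneg fun _ => sq_nonneg _
  calc _ ≤ ∑' k, (F ∘ _) k := hs.tsum_le_tsum hpt hcs
    _ ≤ ∑' x, F x := tsum_comp_le_tsum_of_inj hFs hF0 hinj
    _ = (KK d w (1+δ) * ∑ l ∈ cube d ε, GG d (1+δ) ε l) * l2Sq f := by
      rw [← hGs.tsum_eq]
      exact (hGs.summable.tsum_mul_tsum hf hFs).symm
    _ ≤ _ := by gcongr

lemma minus_case (d : ℕ) (hd : 3 ≤ d) (w : Fin d → ℝ) (δ : ℝ) (hδ0 : 0 ≤ δ) (S : ℝ)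
    (ε : ℝ) (h0 : 0 < ε) (hS : ∑ l ∈ cube d ε, GG d (1+δ) ε l ≤ S)
    (n : ℕ) (q : Fin (n+1)) (f : Chaos d (n+2))
    (hf : Summable (fun k => ‖f k‖^2)) :
    Summable (fun k => ‖TminusD d w ε δ q f k‖^2) ∧
      l2Sq (TminusD d w ε δ q f) ≤ KK d w (1+δ) * S * l2Sq f := by
  have ha : 0 ≤ 1 + δ := by linarith
  have hK : 0 ≤ KK d w (1+δ) := by
    unfold KK; have : 0 ≤ ∑ i, w i ^ 2 := Finset.sum_nonneg fun _ _ => sq_nonneg _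
    positivity
  set Φ : (Fin (n+1) → ZLat d) × ZLat d → (Fin (n+2) → ZLat d) := fun x =>
    Fin.cons x.2 (Fin.cons (x.1 q - x.2) (fun a => x.1 (q.succAbove a))) with hΦ
  have hinj : Function.Injective Φ := minus_inj (d := d) q
  set F : (Fin (n+1) → ZLat d) × ZLat d → ℝ := fun x => ‖f (Φ x)‖^2 with hF
  have hFs : Summable F := hf.comp_injective hinj
  have hS0 : 0 ≤ S := le_trans (Finset.sum_nonneg fun l _ => GG_nonneg _ _ _ h0 l) hS
  have hpt : ∀ k, ‖TminusD d w ε δ q f k‖^2 ≤ (KK d w (1+δ) * S) * ∑' l, F (k, l) := by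
    intro k
    set m : ZLat d → ℝ := fun l => (wSq k / 2) ^ (-(1+δ)/2) * (ε ^ ((d:ℝ)/2) *
      |2 * ε⁻¹ * dotw w (k q) / (2*Real.pi) ^ ((d:ℝ)/2)| ^ (1+δ)) * (Jind d ε l (k q - l) *
        (wSq (Φ (k,l)) / 2) ^ (-(1+δ)/2)) with hm
    have hT : TminusD d w ε δ q f k = ∑ l ∈ cube d ε, (m l : ℂ) * f (Φ (k,l)) := by
      unfold TminusD AminusD negPow
      beta_reduce
      rw [tsum_eq_sum (s := cube d ε)]
      · rw [Finset.mul_sum, Finset.mul_sum]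
        refine Finset.sum_congr rfl fun l _ => ?_
        simp only [hm, hΦ]
        push_cast
        ring
      · intro l hl
        rcases Jind_cases_s12 d hd ε h0 l (k q - l) with hJ | ⟨hJ, hc, _⟩
        · rw [hJ]; simp
        · exact absurd hc hl
    have hmb : ∀ l, (m l)^2 ≤ KK d w (1+δ) * GG d (1+δ) ε l := by
      intro l
      rcases Jind_cases_s12 d hd ε h0 l (k q - l) with hJ | ⟨hJ, hc, hl, hp⟩
      · simp only [hm, hJ]
        simpa using mul_nonneg hK (GG_nonneg _ _ _ h0 l)
      · simp only [hm, hJ, one_mul]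
        simp only [GG, hc, hl, ne_eq, not_false_eq_true, and_self, if_true]
        have hp : k q ≠ 0 := by simpa using hp
        have := mult_bound d w (1+δ) ha ε h0 l (k q) hl hp (wSq (Φ (k,l))) (wSq k)
          (by simpa [hΦ] using nsq_le_wSq (Φ (k,l)) 0) (nsq_le_wSq k q)
        refine le_trans (le_of_eq ?_) this
        ring
    rw [hT]
    calc ‖∑ l ∈ cube d ε, (m l : ℂ) * f (Φ (k,l))‖^2 
        ≤ (∑ l ∈ cube d ε, |m l| * ‖f (Φ (k,l))‖)^2 := by
          gcongr
          refine (norm_sum_le _ _).trans (le_of_eq ?_)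
          refine Finset.sum_congr rfl fun l _ => ?_
          rw [norm_mul, Complex.norm_real, Real.norm_eq_abs]
      _ ≤ (∑ l ∈ cube d ε, |m l|^2) * (∑ l ∈ cube d ε, ‖f (Φ (k,l))‖^2) :=
          Finset.sum_mul_sq_le_sq_mul_sq _ _ _
      _ ≤ (KK d w (1+δ) * S) * ∑' l, F (k, l) := by
          refine mul_le_mul ?_ ?_ (Finset.sum_nonneg fun _ _ => sq_nonneg _) (mul_nonneg hK hS0)
          · refine le_trans ?_ (mul_le_mul_of_nonneg_left hS hK)
            rw [Finset.mul_sum]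
            refine Finset.sum_le_sum fun l _ => ?_
            rw [sq_abs]; exact hmb l
          · exact (hFs.prod_factor k).sum_le_tsum _ (fun _ _ => sq_nonneg _)
  have hcs : Summable (fun k => (KK d w (1+δ) * S) * ∑' l, F (k, l)) := hFs.prod.mul_left _
  have hs : Summable (fun k => ‖TminusD d w ε δ q f k‖^2) :=
    Summable.of_nonneg_of_le (fun _ => sq_nonneg _) hpt hcs
  refine ⟨hs, ?_⟩
  calc _ ≤ ∑' k, (KK d w (1+δ) * S) * ∑' l, F (k, l) := hs.tsum_le_tsum hpt hcs
    _ = (KK d w (1+δ) * S) * ∑' x, F x := by rw [tsum_mul_left, hFs.tsum_prod]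
    _ ≤ _ := by
      refine mul_le_mul_of_nonneg_left ?_ (mul_nonneg hK hS0)
      exact tsum_comp_le_tsum_of_inj (f := fun k => ‖f k‖^2) hf (fun _ => sq_nonneg _) hinj

/-- uniform bounds for the labelled, `δ`-weighted creation and
annihilation operators, `d ≥ 3`.  Here `L²_n → L²_{n+1}` is realised as
`Chaos d (n+1) → Chaos d (n+2)` (and `L²_n → L²_{n−1}` as
`Chaos d (n+2) → Chaos d (n+1)`), and `ε` runs over `(0,1)` with `1/ε ∈ ℕ + 1/2`. -/
theorem stmt12 (d : ℕ) (hd : 3 ≤ d) (w : Fin d → ℝ) (hw : w ≠ 0)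
    (δ : ℝ) (hδ0 : 0 ≤ δ) (hδ : δ < ((d:ℝ)-2)/2) :
    ∃ C : ℝ, 0 < C ∧
      ∀ ε : ℝ, 0 < ε → ε < 1 → (∃ N : ℕ, 1/ε = (N:ℝ) + 1/2) →
      (∀ (n : ℕ) (i j : Fin (n+2)) (h : i < j) (f : Chaos d (n+1)),
        SuppOk f → Summable (fun k => ‖f k‖^2) →
        Summable (fun k => ‖TplusD d w ε δ i j h f k‖^2) ∧
        Real.sqrt (l2Sq (TplusD d w ε δ i j h f)) ≤ C * Real.sqrt (l2Sq f)) ∧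
      (∀ (n : ℕ) (q : Fin (n+1)) (f : Chaos d (n+2)),
        SuppOk f → Summable (fun k => ‖f k‖^2) →
        Summable (fun k => ‖TminusD d w ε δ q f k‖^2) ∧
        Real.sqrt (l2Sq (TminusD d w ε δ q f)) ≤ C * Real.sqrt (l2Sq f)) := by
  have hd0 : (0:ℝ) < d := by exact_mod_cast (by omega : 0 < d)
  have ha2 : 2 * (1+δ) < d := by linarith
  set S : ℝ := (1 + 2/(1-2*(1+δ)/d)) ^ d with hS
  have hS0 : 0 ≤ S := by
    have : 2*(1+δ)/d < 1 := by rw [div_lt_one hd0]; exact ha2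
    have : 0 < 1 - 2*(1+δ)/d := by linarith
    positivity
  have hK : 0 ≤ KK d w (1+δ) := by
    unfold KK; have : 0 ≤ ∑ i, w i ^ 2 := Finset.sum_nonneg fun _ _ => sq_nonneg _
    positivity
  have hfin : ∀ x y : ℝ, 0 ≤ y → x ≤ KK d w (1+δ) * S * y →
      Real.sqrt x ≤ (Real.sqrt (KK d w (1+δ) * S) + 1) * Real.sqrt y := by
    intro x y hy hxy
    refine (Real.sqrt_le_sqrt hxy).trans ?_
    rw [Real.sqrt_mul (mul_nonneg hK hS0)]
    gcongr
    linarith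
  refine ⟨Real.sqrt (KK d w (1+δ) * S) + 1, by positivity, ?_⟩
  intro ε h0 h1 _
  have hSS := GG_sum d (by omega) (1+δ) (by linarith) ha2 ε h0 h1
  refine ⟨fun n i j h f _ hf => ?_, fun n q f _ hf => ?_⟩
  · obtain ⟨h2, h3⟩ := plus_case d hd w δ hδ0 S ε h0 hSS n i j h f hf
    exact ⟨h2, hfin _ _ (tsum_nonneg fun _ => sq_nonneg _) h3⟩
  · obtain ⟨h2, h3⟩ := minus_case d hd w δ hδ0 S ε h0 hSS n q f hf
    exact ⟨h2, hfin _ _ (tsum_nonneg fun _ => sq_nonneg _) h3⟩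

end SBE
end
end
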